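/- Theorem 2.1(ii) for the FA-1f model with two empty boundaries (combination of Lemmas 5.2 and 5.3). Let Σ be the two-boundary interface energy at density ρ∈(0,1) and 𝔸=2ρ(1−ρ)(1−ρ²). Then for every α < −(Σ + 8√(ρ(1−ρ)))/𝔸, the limit lim_{N→∞} φ^{(N)}(α/N) exists and equals −Σ. -/

import Mathlib

/-!
Write `D` for the Dirichlet form and `H` for the escape rate. Both bounds on `φ^{(N)}(α/N)` compare
the variational problem with the interface energy `Σ`.

*Lower bound* (`phi_lower`). A near-minimiser for `Σ_{L,L'}` lives in a fixed finite box.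
Inserting occupied sites in the middle of its occupied pair (`adm_insert`, `adm_extend`) produces a
test function on `N` sites with the same Dirichlet form and the same mean escape rate: an occupied
site between two occupied sites is frozen. Since `exp (α/N) - 1 → 0`, the cost of the activity
disappears in the limit. The same insertion shows that `Σ_{L,L'}` is monotone, so that its iterated
limit is a lower bound (`limit_le_sigma`), and a nonnegative `g` charging only configurations with a
given occupied pair has `D(g) ≥ Σ ν(g²)` (`dirichlet_ge`).

*Upper bound* (`phi_upper`). As `exp x - 1 ≤ x exp x`, it suffices to show
`D(g) + (|α|/N) ν(H g²) ≥ (Σ - ε) ν(g²)` for `g ≥ 0` and `N` large (`upper_core`). The box is cut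
into `M` blocks of fixed length `m = 2ℓ + 2`. The cut-off `hat` of a block is a soft indicator that
the block is full around its centre: it is the average over `1 ≤ j ≤ ℓ` of the indicators of full
concentric windows. A flip at a site where the constraint is satisfied changes at most one of these
indicators (`win_flip`), hence changes the cut-off by at most `1/ℓ` (`hat_grad`), and the total
squared gradient of a cut-off is `O(1/ℓ)`. Together with a constant of size `√(δM)`, these `M`
functions give, after normalisation, a quadratic partition of unity whose localisation error in `D`
is `O(1/(δℓ))` uniformly in `N` (`ims`, `cut_grad`).

The pieces attached to a block charge only configurations whose central pair is occupied, so
`dirichlet_ge` applies to them. On the remaining piece the proportion of full blocks is effectively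
at most `δ`, and there the local inequality `block_bound` is averaged over the blocks
(`none_bound`). That inequality comes from the dynamics in one block with occupied boundaries, which
is reversible and ergodic on the configurations having at least one empty site (`poincare`), so that
a small multiple of the escape rate can be replaced by its mean at the price of a large multiple of
the Dirichlet form of the block; the multiple is affordable because summing over `M` blocks costs a
single copy of `D`. The full configuration, where the block is frozen, is paid for by the potential
`B`. The mean escape rate per site of a block is `𝔸` up to boundary terms, so all that is used
about `α` is `|α| 𝔸 > Σ`; this is weaker than the hypothesis on `α`.
-/

open Finset Filter

open scoped Classical

/-- A configuration on the box `{1,…,N}` (0-indexed by `Fin N`). -/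
abbrev Config (N : ℕ) := Fin N → Bool

/-- Occupation variable `η_i ∈ {0,1}` as a real number. -/
noncomputable def occ {N : ℕ} (η : Config N) (i : Fin N) : ℝ := if η i then 1 else 0

/-- Bernoulli(ρ) product weight of a configuration. -/
noncomputable def bern (ρ : ℝ) {N : ℕ} (η : Config N) : ℝ :=
  ∏ i, (if η i then ρ else 1 - ρ)

/-- Expectation under the Bernoulli(ρ) product measure `ν`. -/
noncomputable def expect (ρ : ℝ) {N : ℕ} (f : Config N → ℝ) : ℝ :=
  ∑ η : Config N, bern ρ η * f η

/-- The configuration `η^i`, obtained by flipping `η` at site `i`. -/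
def flipAt {N : ℕ} (η : Config N) (i : Fin N) : Config N :=
  Function.update η i (!η i)

/-- Occupation at the 1-indexed position `k ∈ {0,…,N+1}`, with boundary value
`bl` at `k = 0` and `br` at `k = N+1` (and beyond). -/
noncomputable def occAt {N : ℕ} (η : Config N) (bl br : ℝ) (k : ℕ) : ℝ :=
  if hk : k = 0 then bl
  else if h : k ≤ N then (if η ⟨k - 1, by omega⟩ then 1 else 0) else br

/-- The three kinetically constrained models considered: East (empty right boundary),
FA-1f with two empty boundaries, FA-1f with one empty (right) boundary. -/
inductive KCM | east | fa2 | fa1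

/-- The kinetic constraint `r_i(η)` of each model, at the (0-indexed) site `i`. -/
noncomputable def constr (m : KCM) {N : ℕ} (η : Config N) (i : Fin N) : ℝ :=
  match m with
  | KCM.east => 1 - occAt η 0 0 (i.1 + 2)
  | KCM.fa2  => 1 - occAt η 0 0 i.1 * occAt η 0 0 (i.1 + 2)
  | KCM.fa1  => 1 - occAt η 1 0 i.1 * occAt η 1 0 (i.1 + 2)

/-- The jump rate `c_i(η) = r_i(η)·[η_i(1−ρ)+(1−η_i)ρ]`. -/
noncomputable def crate (m : KCM) (ρ : ℝ) {N : ℕ} (η : Config N) (i : Fin N) : ℝ :=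
  constr m η i * (if η i then 1 - ρ else ρ)

/-- The escape rate `𝓗(η) = Σ_i c_i(η)`. -/
noncomputable def escRate (m : KCM) (ρ : ℝ) {N : ℕ} (η : Config N) : ℝ :=
  ∑ i, crate m ρ η i

/-- The Dirichlet form `𝒟_N(g) = Σ_i ν(c_i(η)(g(η^i)−g(η))²)`. -/
noncomputable def dirichlet (m : KCM) (ρ : ℝ) {N : ℕ} (g : Config N → ℝ) : ℝ :=
  ∑ i, expect ρ (fun η => crate m ρ η i * (g (flipAt η i) - g η) ^ 2)

/-- The rescaled cumulant generating function `φ^{(N)}(λ)`, via the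
Donsker–Varadhan variational (principal eigenvalue) formula. -/
noncomputable def phi (m : KCM) (ρ : ℝ) (N : ℕ) (lam : ℝ) : ℝ :=
  sSup { x | ∃ f : Config N → ℝ, (∀ η, 0 ≤ f η) ∧ expect ρ f = 1 ∧
    x = (Real.exp lam - 1) * expect ρ (fun η => f η * escRate m ρ η)
        - Real.exp lam * dirichlet m ρ (fun η => Real.sqrt (f η)) }

/-- The mean instantaneous activity `𝔸 = ν(c_j)` at an interior site `j`:
`2ρ(1−ρ)²` for East and `2ρ(1−ρ)(1−ρ²)` for FA-1f. -/
noncomputable def meanAct (m : KCM) (ρ : ℝ) : ℝ :=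
  match m with
  | KCM.east => 2 * ρ * (1 - ρ) ^ 2
  | _ => 2 * ρ * (1 - ρ) * (1 - ρ ^ 2)

/-- The two-boundary interface energy `Σ_{L,L'}` for FA-1f with two empty
boundaries: the infimum of `𝒟_{L+L'+2}(√f)` over probability densities `f`
with `ν(f·η_{L+1}η_{L+2}) = 1`. -/
noncomputable def SigmaTwo (ρ : ℝ) (L L' : ℕ) : ℝ :=
  sInf { x | ∃ f : Config (L + L' + 2) → ℝ, (∀ η, 0 ≤ f η) ∧ expect ρ f = 1 ∧
    expect ρ (fun η => f η * occ η ⟨L, by omega⟩ * occ η ⟨L + 1, by omega⟩) = 1 ∧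
    x = dirichlet KCM.fa2 ρ (fun η => Real.sqrt (f η)) }

/-- The one-boundary interface energy `Σ_L`: the infimum of `𝒟_L(√f)`
over probability densities `f` with `ν(f·η_1) = 1`, for the model `m`. -/
noncomputable def SigmaOne (m : KCM) (ρ : ℝ) (L : ℕ) : ℝ :=
  sInf { x | ∃ f : Config L → ℝ, (∀ η, 0 ≤ f η) ∧ expect ρ f = 1 ∧
    expect ρ (fun η => f η * occAt η 0 0 1) = 1 ∧
    x = dirichlet m ρ (fun η => Real.sqrt (f η)) }


/-! ### The Bernoulli expectation -/

/-- Single-site Bernoulli weight. -/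
noncomputable def wt (ρ : ℝ) (b : Bool) : ℝ := if b then ρ else 1 - ρ

lemma bern_eq (ρ : ℝ) {N : ℕ} (η : Config N) : bern ρ η = ∏ i, wt ρ (η i) := rfl

lemma wt_pos {ρ : ℝ} (h0 : 0 < ρ) (h1 : ρ < 1) (b : Bool) : 0 < wt ρ b := by
  unfold wt; split_ifs <;> linarith

lemma wt_add_not (ρ : ℝ) (b : Bool) : wt ρ b + wt ρ (!b) = 1 := by
  cases b <;> simp [wt]

lemma bern_pos {ρ : ℝ} (h0 : 0 < ρ) (h1 : ρ < 1) {N : ℕ} (η : Config N) : 0 < bern ρ η :=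
  Finset.prod_pos fun i _ => wt_pos h0 h1 (η i)

lemma ex_add (ρ : ℝ) {N : ℕ} (f g : Config N → ℝ) :
    _root_.expect ρ (fun η => f η + g η) = _root_.expect ρ f + _root_.expect ρ g := by
  simp [_root_.expect, mul_add, Finset.sum_add_distrib]

lemma ex_sub (ρ : ℝ) {N : ℕ} (f g : Config N → ℝ) :
    _root_.expect ρ (fun η => f η - g η) = _root_.expect ρ f - _root_.expect ρ g := by
  simp [_root_.expect, mul_sub, Finset.sum_sub_distrib]

lemma ex_mul (ρ : ℝ) {N : ℕ} (c : ℝ) (f : Config N → ℝ) :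
    _root_.expect ρ (fun η => c * f η) = c * _root_.expect ρ f := by
  simp only [_root_.expect, Finset.mul_sum]
  exact Finset.sum_congr rfl fun η _ => by ring

lemma ex_sum (ρ : ℝ) {N : ℕ} {ι : Type*} (s : Finset ι) (f : ι → Config N → ℝ) :
    _root_.expect ρ (fun η => ∑ a ∈ s, f a η) = ∑ a ∈ s, _root_.expect ρ (f a) := by
  simp only [_root_.expect, Finset.mul_sum]
  exact Finset.sum_comm

lemma ex_mono {ρ : ℝ} (h0 : 0 < ρ) (h1 : ρ < 1) {N : ℕ} {f g : Config N → ℝ}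
    (h : ∀ η, f η ≤ g η) : _root_.expect ρ f ≤ _root_.expect ρ g :=
  Finset.sum_le_sum fun η _ => mul_le_mul_of_nonneg_left (h η) (bern_pos h0 h1 η).le

lemma ex_nonneg {ρ : ℝ} (h0 : 0 < ρ) (h1 : ρ < 1) {N : ℕ} {f : Config N → ℝ}
    (h : ∀ η, 0 ≤ f η) : 0 ≤ _root_.expect ρ f :=
  Finset.sum_nonneg fun η _ => mul_nonneg (bern_pos h0 h1 η).le (h η)

lemma ex_congr {ρ : ℝ} {N : ℕ} {f g : Config N → ℝ} (h : ∀ η, f η = g η) : _root_.expect ρ f = _root_.expect ρ g := by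
  rw [funext h]

lemma sum_bern (ρ : ℝ) (N : ℕ) : ∑ η : Config N, bern ρ η = 1 := by
  have h := Finset.prod_univ_sum (fun _ : Fin N => (Finset.univ : Finset Bool))
    (fun _ b => wt ρ b)
  rw [Fintype.piFinset_univ] at h
  simp only [bern_eq]
  rw [← h]
  simp [wt]

lemma ex_const (ρ : ℝ) {N : ℕ} (c : ℝ) : _root_.expect ρ (fun _ : Config N => c) = c := by
  simp [_root_.expect, ← Finset.sum_mul, sum_bern]

/-! ### Flips and detailed balance -/

lemma flipAt_flipAt {N : ℕ} (η : Config N) (i : Fin N) : flipAt (flipAt η i) i = η := by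
  simp [flipAt]

lemma flipAt_same {N : ℕ} (η : Config N) (i : Fin N) : flipAt η i i = !η i := by
  simp [flipAt]

lemma flipAt_ne {N : ℕ} (η : Config N) {i j : Fin N} (h : j ≠ i) : flipAt η i j = η j := by
  simp [flipAt, h]

/-- The flip at `i` as a permutation of the configuration space. -/
def flipEquiv {N : ℕ} (i : Fin N) : Config N ≃ Config N where
  toFun η := flipAt η i
  invFun η := flipAt η i
  left_inv η := flipAt_flipAt η i
  right_inv η := flipAt_flipAt η i

lemma sum_flip {N : ℕ} (i : Fin N) (F : Config N → ℝ) :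
    ∑ η, F (flipAt η i) = ∑ η, F η :=
  Equiv.sum_comp (flipEquiv i) F

lemma bern_flip (ρ : ℝ) {N : ℕ} (η : Config N) (i : Fin N) :
    bern ρ (flipAt η i) * wt ρ (η i) = bern ρ η * wt ρ (!η i) := by
  rw [bern_eq, bern_eq, ← Finset.mul_prod_erase _ _ (Finset.mem_univ i),
    ← Finset.mul_prod_erase _ (fun j => wt ρ (η j)) (Finset.mem_univ i), flipAt_same]
  rw [Finset.prod_congr rfl (fun j hj => by rw [flipAt_ne η (Finset.ne_of_mem_erase hj)])]
  ring

/-- Resampling the site `i` leaves the Bernoulli expectation unchanged. -/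
lemma ex_resample (ρ : ℝ) {N : ℕ} (i : Fin N) (F : Config N → ℝ) :
    _root_.expect ρ F = _root_.expect ρ (fun η => ρ * F (Function.update η i true)
      + (1 - ρ) * F (Function.update η i false)) := by
  have key : ∀ η : Config N, ρ * F (Function.update η i true)
      + (1 - ρ) * F (Function.update η i false)
      = wt ρ (η i) * F η + wt ρ (!η i) * F (flipAt η i) := by
    intro η
    unfold flipAt
    cases h : η i
    · have : Function.update η i false = η := by rw [← h, Function.update_eq_self]
      simp [wt, this]; ring
    · have : Function.update η i true = η := by rw [← h, Function.update_eq_self]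
      simp [wt, this]
  rw [ex_congr key, ex_add]
  have : _root_.expect ρ (fun η : Config N => wt ρ (!η i) * F (flipAt η i))
      = _root_.expect ρ (fun η => wt ρ (!η i) * F η) := by
    unfold _root_.expect
    rw [← sum_flip i (fun η => bern ρ η * (wt ρ (!η i) * F η))]
    refine Finset.sum_congr rfl fun η _ => ?_
    rw [flipAt_same, Bool.not_not, ← mul_assoc, ← mul_assoc, bern_flip]
  rw [this, ← ex_add]
  refine ex_congr fun η => ?_
  rw [← add_mul, wt_add_not, one_mul]

/-! ### Rates -/

lemma occAt_mem {N : ℕ} (η : Config N) {bl br : ℝ} (hl : bl = 0 ∨ bl = 1) (hr : br = 0 ∨ br = 1)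
    (k : ℕ) : occAt η bl br k = 0 ∨ occAt η bl br k = 1 := by
  unfold occAt; split_ifs <;> simp_all

lemma occAt_flip {N : ℕ} (η : Config N) (bl br : ℝ) (i : Fin N) {k : ℕ} (h : k ≠ i.1 + 1) :
    occAt (flipAt η i) bl br k = occAt η bl br k := by
  unfold occAt
  split_ifs with h1 h2 <;> try rfl
  all_goals
    rename_i a b
    rw [flipAt_ne] at a
    · simp_all
    · intro h3; apply h; rw [← h3]; simp; omega

/-- The FA-1f constraint with boundary values `b` on both sides. -/
noncomputable def rr (b : ℝ) {N : ℕ} (η : Config N) (i : Fin N) : ℝ :=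
  1 - occAt η b b i.1 * occAt η b b (i.1 + 2)

lemma constr_eq {N : ℕ} (η : Config N) (i : Fin N) : constr KCM.fa2 η i = rr 0 η i := rfl

lemma rr_flip (b : ℝ) {N : ℕ} (η : Config N) (i : Fin N) : rr b (flipAt η i) i = rr b η i := by
  unfold rr; rw [occAt_flip _ _ _ _ (by omega), occAt_flip _ _ _ _ (by omega)]

lemma rr_mem {b : ℝ} (hb : b = 0 ∨ b = 1) {N : ℕ} (η : Config N) (i : Fin N) :
    rr b η i = 0 ∨ rr b η i = 1 := by
  unfold rr
  rcases occAt_mem η hb hb i.1 with h | h <;> rcases occAt_mem η hb hb (i.1 + 2) with h' | h' <;>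
    simp [h, h']

/-- Jump rate at `i` with boundary values `b` on both sides; `b = 0` is the model itself, `b = 1`
is the dynamics of a block that gets no help from its surroundings. -/
noncomputable def rate (b ρ : ℝ) {N : ℕ} (η : Config N) (i : Fin N) : ℝ :=
  rr b η i * wt ρ (!η i)

lemma crate_eq (ρ : ℝ) {N : ℕ} (η : Config N) (i : Fin N) :
    crate KCM.fa2 ρ η i = rate 0 ρ η i := by
  unfold crate rate wt; rw [constr_eq]; cases η i <;> simp

lemma rate_nonneg {b ρ : ℝ} (hb : b = 0 ∨ b = 1) (h0 : 0 < ρ) (h1 : ρ < 1) {N : ℕ}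
    (η : Config N) (i : Fin N) : 0 ≤ rate b ρ η i := by
  unfold rate
  rcases rr_mem hb η i with h | h <;> rw [h]
  · simp
  · simpa using (wt_pos h0 h1 _).le

lemma rate_le {b ρ : ℝ} (hb : b = 0 ∨ b = 1) (h0 : 0 < ρ) (h1 : ρ < 1) {N : ℕ}
    (η : Config N) (i : Fin N) : rate b ρ η i ≤ rr b η i := by
  unfold rate
  have : wt ρ (!η i) ≤ 1 := by unfold wt; split_ifs <;> linarith
  rcases rr_mem hb η i with h | h <;> rw [h] <;> simp [this]

lemma bern_rate_flip (b ρ : ℝ) {N : ℕ} (η : Config N) (i : Fin N) :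
    bern ρ (flipAt η i) * rate b ρ (flipAt η i) i = bern ρ η * rate b ρ η i := by
  unfold rate
  rw [rr_flip, flipAt_same, Bool.not_not]
  linear_combination rr b η i * bern_flip ρ η i

/-- Detailed balance. -/
lemma ex_rate_flip (b ρ : ℝ) {N : ℕ} (i : Fin N) (F : Config N → ℝ) :
    _root_.expect ρ (fun η => rate b ρ η i * F (flipAt η i)) = _root_.expect ρ (fun η => rate b ρ η i * F η) := by
  unfold _root_.expect
  rw [← sum_flip i (fun η => bern ρ η * (rate b ρ η i * F η))]
  refine Finset.sum_congr rfl fun η _ => ?_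
  rw [← mul_assoc, ← mul_assoc, bern_rate_flip]

/-- Contribution of the site `i` to the Dirichlet form with boundary values `b`. -/
noncomputable def dirAt (b ρ : ℝ) {N : ℕ} (g : Config N → ℝ) (i : Fin N) : ℝ :=
  _root_.expect ρ (fun η => rate b ρ η i * (g (flipAt η i) - g η) ^ 2)

lemma dirAt_nonneg {b ρ : ℝ} (hb : b = 0 ∨ b = 1) (h0 : 0 < ρ) (h1 : ρ < 1) {N : ℕ}
    (g : Config N → ℝ) (i : Fin N) : 0 ≤ dirAt b ρ g i :=
  ex_nonneg h0 h1 fun η => mul_nonneg (rate_nonneg hb h0 h1 η i) (sq_nonneg _)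

lemma dirichlet_eq (ρ : ℝ) {N : ℕ} (g : Config N → ℝ) :
    dirichlet KCM.fa2 ρ g = ∑ i, dirAt 0 ρ g i := by
  unfold dirichlet dirAt
  simp only [crate_eq]

lemma dirichlet_nonneg {ρ : ℝ} (h0 : 0 < ρ) (h1 : ρ < 1) {N : ℕ} (g : Config N → ℝ) :
    0 ≤ dirichlet KCM.fa2 ρ g := by
  rw [dirichlet_eq]; exact Finset.sum_nonneg fun i _ => dirAt_nonneg (Or.inl rfl) h0 h1 g i

lemma escRate_eq (ρ : ℝ) {N : ℕ} (η : Config N) :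
    escRate KCM.fa2 ρ η = ∑ i, rate 0 ρ η i := by
  unfold escRate; simp only [crate_eq]

lemma escRate_nonneg {ρ : ℝ} (h0 : 0 < ρ) (h1 : ρ < 1) {N : ℕ} (η : Config N) :
    0 ≤ escRate KCM.fa2 ρ η := by
  rw [escRate_eq]; exact Finset.sum_nonneg fun i _ => rate_nonneg (Or.inl rfl) h0 h1 η i


/-! ### Inserting an occupied site -/

lemma ex_insertNth (ρ : ℝ) {n : ℕ} (q : Fin (n + 1)) (F : Config (n + 1) → ℝ) :
    _root_.expect ρ F = ρ * _root_.expect ρ (fun ξ : Config n => F (q.insertNth true ξ))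
      + (1 - ρ) * _root_.expect ρ (fun ξ : Config n => F (q.insertNth false ξ)) := by
  have hb : ∀ (b : Bool) (ξ : Config n),
      bern ρ (q.insertNth b ξ : Config (n + 1)) = wt ρ b * bern ρ ξ := by
    intro b ξ
    rw [bern_eq, Fin.prod_univ_succAbove _ q, bern_eq]
    simp
  unfold _root_.expect
  rw [← Equiv.sum_comp (Fin.insertNthEquiv (fun _ => Bool) q), Fintype.sum_prod_type]
  simp only [Fintype.sum_bool, Fin.insertNthEquiv, Equiv.coe_fn_mk, hb, Finset.mul_sum]
  congr 1 <;> refine Finset.sum_congr rfl fun ξ _ => ?_ <;> simp [wt] <;> ring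

lemma flipAt_insertNth_self {n : ℕ} (q : Fin (n + 1)) (b : Bool) (ξ : Config n) :
    flipAt (q.insertNth b ξ : Config (n + 1)) q = q.insertNth (!b) ξ := by
  funext i
  by_cases h : i = q
  · subst h; simp [flipAt]
  · obtain ⟨j, rfl⟩ := Fin.exists_succAbove_eq h
    rw [flipAt_ne _ h]; simp

lemma flipAt_insertNth_succAbove {n : ℕ} (q : Fin (n + 1)) (b : Bool) (ξ : Config n) (j : Fin n) :
    flipAt (q.insertNth b ξ : Config (n + 1)) (q.succAbove j) = q.insertNth b (flipAt ξ j) := by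
  funext i
  by_cases h : i = q
  · subst h; rw [flipAt_ne _ (Fin.ne_succAbove _ _)]; simp
  · obtain ⟨k, rfl⟩ := Fin.exists_succAbove_eq h
    by_cases hk : k = j
    · subst hk; simp [flipAt]
    · rw [flipAt_ne _ (fun e => hk (Fin.succAbove_right_injective e))]
      simp [flipAt_ne _ hk]

lemma succAbove_val {n : ℕ} (q : Fin (n + 1)) (j : Fin n) :
    (q.succAbove j).1 = if j.1 < q.1 then j.1 else j.1 + 1 := by
  simp only [Fin.succAbove, Fin.lt_def]
  split_ifs with h1 h2 h2 <;> simp_all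

lemma occAt_insertNth_lo {n : ℕ} (q : Fin (n + 1)) (b : Bool) (ξ : Config n) {k : ℕ}
    (h : k ≤ q.1) : occAt (q.insertNth b ξ : Config (n + 1)) 0 0 k = occAt ξ 0 0 k := by
  have hq := q.2
  unfold occAt
  by_cases h0 : k = 0
  · simp [h0]
  · have h1 : k ≤ n := by omega
    have h2 : k ≤ n + 1 := by omega
    have e : (⟨k - 1, by omega⟩ : Fin (n + 1)) = q.succAbove ⟨k - 1, by omega⟩ := by
      apply Fin.ext; rw [succAbove_val]; simp; omega
    simp only [h0, h1, h2, dite_true, dite_false, e, Fin.insertNth_apply_succAbove]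

lemma occAt_insertNth_self {n : ℕ} (q : Fin (n + 1)) (b : Bool) (ξ : Config n) :
    occAt (q.insertNth b ξ : Config (n + 1)) 0 0 (q.1 + 1) = if b then 1 else 0 := by
  have hq := q.2
  unfold occAt
  have h2 : q.1 + 1 ≤ n + 1 := by omega
  simp [h2]

lemma occAt_insertNth_hi {n : ℕ} (q : Fin (n + 1)) (b : Bool) (ξ : Config n) {k : ℕ}
    (h : q.1 + 1 ≤ k) :
    occAt (q.insertNth b ξ : Config (n + 1)) 0 0 (k + 1) = occAt ξ 0 0 k := by
  have hq := q.2
  unfold occAt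
  have h0 : k ≠ 0 := by omega
  by_cases h1 : k ≤ n
  · have h2 : k + 1 ≤ n + 1 := by omega
    have e : (⟨k + 1 - 1, by omega⟩ : Fin (n + 1)) = q.succAbove ⟨k - 1, by omega⟩ := by
      apply Fin.ext; rw [succAbove_val]; simp; split_ifs <;> omega
    simp only [h0, h1, h2, dite_true, dite_false, e, Fin.insertNth_apply_succAbove,
      Nat.add_eq_zero_iff, one_ne_zero, and_false]
  · have h2 : ¬ k + 1 ≤ n + 1 := by omega
    simp only [h0, h1, h2, dite_false, Nat.add_eq_zero_iff, one_ne_zero, and_false]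

lemma rr_insertNth_succAbove {n p : ℕ} (q : Fin (n + 1)) (hq : q.1 = p + 1) (ξ : Config n)
    (j : Fin n) (h1 : j.1 ≠ p → occAt ξ 0 0 (p + 1) = 1)
    (h2 : j.1 ≠ p + 1 → occAt ξ 0 0 (p + 2) = 1) :
    rr 0 (q.insertNth true ξ : Config (n + 1)) (q.succAbove j) = rr 0 ξ j := by
  unfold rr
  rw [succAbove_val]
  have hs := occAt_insertNth_self q true ξ
  rw [hq] at hs
  simp only [if_true] at hs
  split_ifs with h
  · rw [occAt_insertNth_lo q true ξ (by omega)]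
    by_cases hj : j.1 = p
    · rw [hj, hs, h2 (by omega)]
    · rw [occAt_insertNth_lo q true ξ (by omega)]
  · rw [occAt_insertNth_hi q true ξ (k := j.1 + 2) (by omega)]
    by_cases hj : j.1 = p + 1
    · rw [hj, hs, h1 (by omega)]
    · rw [occAt_insertNth_hi q true ξ (k := j.1) (by omega)]

/-- `g ≥ 0` is an `L²`-normalised function (the square root of a probability density) charging only
configurations whose sites `p + 1` and `p + 2`, counted from `1`, are both occupied. -/
def Adm (ρ : ℝ) (n p : ℕ) (g : Config n → ℝ) : Prop :=
  (∀ η, 0 ≤ g η) ∧ _root_.expect ρ (fun η => g η ^ 2) = 1 ∧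
    ∀ η, g η ≠ 0 → occAt η 0 0 (p + 1) = 1 ∧ occAt η 0 0 (p + 2) = 1

/-- An occupied site can be inserted in the middle of an occupied pair at no cost: the new site and
its neighbours see exactly the same constraints as before. -/
lemma adm_insert {ρ : ℝ} (h0 : 0 < ρ) {n p : ℕ} {g : Config n → ℝ} (hg : Adm ρ n p g)
    (hp : p + 2 ≤ n) :
    ∃ G : Config (n + 1) → ℝ, Adm ρ (n + 1) p G ∧ Adm ρ (n + 1) (p + 1) G ∧
      dirichlet KCM.fa2 ρ G = dirichlet KCM.fa2 ρ g ∧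
      _root_.expect ρ (fun η => G η ^ 2 * escRate KCM.fa2 ρ η)
        = _root_.expect ρ (fun η => g η ^ 2 * escRate KCM.fa2 ρ η) := by
  obtain ⟨hg0, hg1, hg2⟩ := hg
  let q : Fin (n + 1) := ⟨p + 1, by omega⟩
  have hq : q.1 = p + 1 := rfl
  let G : Config (n + 1) → ℝ := fun η => if η q then g (q.removeNth η) / Real.sqrt ρ else 0
  have hs : 0 < Real.sqrt ρ := Real.sqrt_pos.2 h0
  have hss : Real.sqrt ρ ^ 2 = ρ := Real.sq_sqrt h0.le
  have hGt : ∀ ξ : Config n, G (q.insertNth true ξ) = g ξ / Real.sqrt ρ := by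
    intro ξ; simp [G]
  have hGf : ∀ ξ : Config n, G (q.insertNth false ξ) = 0 := by
    intro ξ; simp [G]
  have hG0 : ∀ η, 0 ≤ G η := by
    intro η; simp only [G]; split_ifs
    · exact div_nonneg (hg0 _) hs.le
    · exact le_rfl
  have hsq : ∀ x : ℝ, ρ * ((x / Real.sqrt ρ) ^ 2) = x ^ 2 := by
    intro x; rw [div_pow, hss]; field_simp
  have hG1 : _root_.expect ρ (fun η => G η ^ 2) = 1 := by
    rw [ex_insertNth ρ q]
    simp only [hGt, hGf]
    rw [← ex_mul]
    simp only [hsq]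
    rw [hg1]
    simp [ex_const]
  have hG2 : ∀ η, G η ≠ 0 → occAt η 0 0 (p + 1) = 1 ∧ occAt η 0 0 (p + 2) = 1
      ∧ occAt η 0 0 (p + 3) = 1 := by
    intro η h
    have hη : η = q.insertNth (η q) (q.removeNth η) := by simp
    set ξ := q.removeNth η with hξ
    cases hb : η q
    · rw [hη, hb, hGf] at h; exact absurd rfl h
    · rw [hb] at hη
      rw [hη, hGt] at h
      have h' : g ξ ≠ 0 := fun e => h (by rw [e, zero_div])
      obtain ⟨a, b⟩ := hg2 ξ h'
      rw [hη]
      refine ⟨?_, ?_, ?_⟩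
      · rw [occAt_insertNth_lo q true ξ (by omega), a]
      · simpa [hq] using occAt_insertNth_self q true ξ
      · rw [occAt_insertNth_hi q true ξ (k := p + 2) (by omega), b]
  have hrq : ∀ ξ b, g ξ ≠ 0 → rr 0 (q.insertNth b ξ : Config (n + 1)) q = 0 := by
    intro ξ b h
    obtain ⟨a, c⟩ := hg2 ξ h
    unfold rr
    rw [occAt_insertNth_lo q b ξ le_rfl, hq, occAt_insertNth_hi q b ξ (k := p + 2) (by omega), a, c]
    norm_num
  have hrs : ∀ ξ j, (g ξ ≠ 0 ∨ g (flipAt ξ j) ≠ 0) →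
      rate 0 ρ (q.insertNth true ξ : Config (n + 1)) (q.succAbove j) = rate 0 ρ ξ j := by
    intro ξ j h
    unfold rate
    rw [rr_insertNth_succAbove (p := p) q hq ξ j, Fin.insertNth_apply_succAbove]
    · intro hj
      rcases h with h | h
      · exact (hg2 _ h).1
      · rw [← occAt_flip ξ 0 0 j (by omega)]; exact (hg2 _ h).1
    · intro hj
      rcases h with h | h
      · exact (hg2 _ h).2
      · rw [← occAt_flip ξ 0 0 j (by omega)]; exact (hg2 _ h).2
  refine ⟨G, ⟨hG0, hG1, fun η h => ⟨(hG2 η h).1, (hG2 η h).2.1⟩⟩,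
    ⟨hG0, hG1, fun η h => ⟨(hG2 η h).2.1, (hG2 η h).2.2⟩⟩, ?_, ?_⟩
  · rw [dirichlet_eq, dirichlet_eq, Fin.sum_univ_succAbove _ q]
    have e1 : dirAt 0 ρ G q = 0 := by
      unfold dirAt
      rw [ex_insertNth ρ q]
      have : ∀ b ξ, rate 0 ρ (q.insertNth b ξ : Config (n + 1)) q
          * (G (flipAt (q.insertNth b ξ) q) - G (q.insertNth b ξ)) ^ 2 = 0 := by
        intro b ξ
        rw [flipAt_insertNth_self]
        by_cases h : g ξ = 0
        · cases b <;> simp [hGt, hGf, h]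
        · unfold rate; rw [hrq ξ b h]; simp
      simp only [this]
      simp [ex_const]
    rw [e1, zero_add]
    refine Finset.sum_congr rfl fun j _ => ?_
    unfold dirAt
    rw [ex_insertNth ρ q]
    simp only [flipAt_insertNth_succAbove, hGt, hGf]
    rw [← ex_mul]
    simp only [sub_self, ne_eq, OfNat.ofNat_ne_zero, not_false_eq_true, zero_pow, mul_zero,
      ex_const, add_zero]
    refine ex_congr fun ξ => ?_
    rw [← sub_div, mul_left_comm, hsq]
    by_cases h : g ξ ≠ 0 ∨ g (flipAt ξ j) ≠ 0
    · rw [hrs ξ j h]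
    · push Not at h
      rw [h.1, h.2]; simp
  · rw [ex_insertNth ρ q]
    simp only [hGt, hGf]
    rw [← ex_mul]
    simp only [ne_eq, OfNat.ofNat_ne_zero, not_false_eq_true, zero_pow, zero_mul, mul_zero,
      ex_const, add_zero]
    refine ex_congr fun ξ => ?_
    rw [← mul_assoc, hsq]
    by_cases h : g ξ = 0
    · simp [h]
    · congr 1
      rw [escRate_eq, escRate_eq, Fin.sum_univ_succAbove _ q]
      rw [Finset.sum_congr rfl (fun j _ => hrs ξ j (Or.inl h))]
      unfold rate
      rw [hrq ξ true h]; simp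


/-! ### The two-boundary interface energy -/

lemma occAt_succ {N : ℕ} (η : Config N) {k : ℕ} (h : k < N) :
    occAt η 0 0 (k + 1) = occ η ⟨k, h⟩ := by
  have : k + 1 ≤ N := h
  unfold occAt occ
  simp [this]

lemma sigmaTwo_eq {ρ : ℝ} (h0 : 0 < ρ) (h1 : ρ < 1) (L L' : ℕ) :
    SigmaTwo ρ L L' = sInf {x | ∃ g : Config (L + L' + 2) → ℝ, Adm ρ (L + L' + 2) L g ∧
      x = dirichlet KCM.fa2 ρ g} := by
  unfold SigmaTwo
  congr 1
  ext x
  constructor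
  · rintro ⟨f, hf0, hf1, hf2, rfl⟩
    refine ⟨fun η => Real.sqrt (f η), ⟨fun η => Real.sqrt_nonneg _, ?_, ?_⟩, rfl⟩
    · simpa only [Real.sq_sqrt (hf0 _)] using hf1
    · -- the two normalisations force `f` to vanish off the occupied pair
      intro η hη
      have hz : _root_.expect ρ (fun η => f η * (1 - occ η ⟨L, by omega⟩
          * occ η ⟨L + 1, by omega⟩)) = 0 := by
        have e : _root_.expect ρ f - _root_.expect ρ (fun η => f η * occ η ⟨L, by omega⟩
            * occ η ⟨L + 1, by omega⟩) = 0 := by rw [hf1, hf2, sub_self]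
        rw [← ex_sub] at e
        rw [← e]
        exact ex_congr fun η => by ring
      have hn : ∀ η : Config (L + L' + 2), 0 ≤ bern ρ η * (f η * (1 - occ η ⟨L, by omega⟩
          * occ η ⟨L + 1, by omega⟩)) := by
        intro η
        refine mul_nonneg (bern_pos h0 h1 η).le (mul_nonneg (hf0 η) ?_)
        unfold occ; split_ifs <;> norm_num
      have := (Finset.sum_eq_zero_iff_of_nonneg (fun η _ => hn η)).1 hz η (Finset.mem_univ _)
      have hfη : f η ≠ 0 := fun e => hη (by simp [e])
      rw [occAt_succ η (by omega : L < L + L' + 2), occAt_succ η (by omega : L + 1 < L + L' + 2)]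
      have h3 : (1 - occ η ⟨L, by omega⟩ * occ η ⟨L + 1, by omega⟩ : ℝ) = 0 := by
        rcases mul_eq_zero.1 this with h | h
        · exact absurd h (bern_pos h0 h1 η).ne'
        · exact (mul_eq_zero.1 h).resolve_left hfη
      unfold occ at h3 ⊢
      split_ifs at h3 ⊢ <;> simp_all
  · rintro ⟨g, ⟨hg0, hg1, hg2⟩, rfl⟩
    refine ⟨fun η => g η ^ 2, fun η => sq_nonneg _, hg1, ?_, ?_⟩
    · rw [← hg1]
      refine ex_congr fun η => ?_
      by_cases h : g η = 0
      · simp [h]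
      · obtain ⟨a, b⟩ := hg2 η h
        rw [occAt_succ η (by omega : L < L + L' + 2)] at a
        rw [occAt_succ η (by omega : L + 1 < L + L' + 2)] at b
        rw [a, b]; ring
    · simp only [Real.sqrt_sq (hg0 _)]

lemma adm_exists {ρ : ℝ} (h0 : 0 < ρ) (h1 : ρ < 1) {n p : ℕ} (hp : p + 2 ≤ n) :
    ∃ g, Adm ρ n p g := by
  let u : Config n := fun _ => true
  have hu : 0 < bern ρ u := bern_pos h0 h1 u
  refine ⟨fun η => if η = u then Real.sqrt (bern ρ u)⁻¹ else 0, ?_, ?_, ?_⟩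
  · intro η; dsimp only; split_ifs
    · exact Real.sqrt_nonneg _
    · exact le_rfl
  · unfold _root_.expect
    rw [Finset.sum_eq_single u]
    · simp only [if_true]
      rw [Real.sq_sqrt (inv_nonneg.2 hu.le), mul_inv_cancel₀ hu.ne']
    · intro η _ h; simp [h]
    · intro h; exact absurd (Finset.mem_univ _) h
  · intro η h
    have : η = u := by by_contra e; simp [e] at h
    subst this
    rw [occAt_succ _ (by omega : p < n), occAt_succ _ (by omega : p + 1 < n)]
    simp [occ, u]

lemma sigma_le_of_adm {ρ : ℝ} (h0 : 0 < ρ) (h1 : ρ < 1) {L L' n : ℕ} (hn : n = L + L' + 2)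
    {g : Config n → ℝ} (hg : Adm ρ n L g) : SigmaTwo ρ L L' ≤ dirichlet KCM.fa2 ρ g := by
  subst hn
  rw [sigmaTwo_eq h0 h1]
  refine csInf_le ⟨0, ?_⟩ ⟨g, hg, rfl⟩
  rintro x ⟨g, -, rfl⟩
  exact dirichlet_nonneg h0 h1 g

lemma le_sigma {ρ : ℝ} (h0 : 0 < ρ) (h1 : ρ < 1) {L L' : ℕ} {c : ℝ}
    (h : ∀ g, Adm ρ (L + L' + 2) L g → c ≤ dirichlet KCM.fa2 ρ g) : c ≤ SigmaTwo ρ L L' := by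
  rw [sigmaTwo_eq h0 h1]
  obtain ⟨g, hg⟩ := adm_exists h0 h1 (n := L + L' + 2) (p := L) (by omega)
  refine le_csInf ⟨_, g, hg, rfl⟩ ?_
  rintro x ⟨g, hg, rfl⟩
  exact h g hg

lemma sigma_nonneg {ρ : ℝ} (h0 : 0 < ρ) (h1 : ρ < 1) (L L' : ℕ) : 0 ≤ SigmaTwo ρ L L' :=
  le_sigma h0 h1 fun g _ => dirichlet_nonneg h0 h1 g

lemma sigma_anti_right {ρ : ℝ} (h0 : 0 < ρ) (h1 : ρ < 1) (L L' : ℕ) :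
    SigmaTwo ρ L (L' + 1) ≤ SigmaTwo ρ L L' := by
  refine le_sigma h0 h1 fun g hg => ?_
  obtain ⟨G, hG, -, hD, -⟩ := adm_insert h0 hg (by omega)
  rw [← hD]
  exact sigma_le_of_adm h0 h1 (by omega) hG

lemma sigma_anti_left {ρ : ℝ} (h0 : 0 < ρ) (h1 : ρ < 1) (L L' : ℕ) :
    SigmaTwo ρ (L + 1) L' ≤ SigmaTwo ρ L L' := by
  refine le_sigma h0 h1 fun g hg => ?_
  obtain ⟨G, -, hG, hD, -⟩ := adm_insert h0 hg (by omega)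
  rw [← hD]
  exact sigma_le_of_adm h0 h1 (by omega) hG

/-- The iterated limit of the interface energies is a lower bound for each of them. -/
lemma limit_le_sigma {ρ : ℝ} (h0 : 0 < ρ) (h1 : ρ < 1) {Sg : ℝ} {S : ℕ → ℝ}
    (hS : ∀ L : ℕ, Filter.Tendsto (fun L' : ℕ => SigmaTwo ρ L L') Filter.atTop (nhds (S L)))
    (hSg : Filter.Tendsto S Filter.atTop (nhds Sg)) (L L' : ℕ) : Sg ≤ SigmaTwo ρ L L' := by
  have a1 : Antitone S := antitone_nat_of_succ_le fun L =>
    le_of_tendsto_of_tendsto' (hS (L + 1)) (hS L) fun L' => sigma_anti_left h0 h1 L L'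
  have a2 : Antitone (fun L' => SigmaTwo ρ L L') :=
    antitone_nat_of_succ_le fun L' => sigma_anti_right h0 h1 L L'
  exact (a1.le_of_tendsto hSg L).trans (a2.le_of_tendsto (hS L) L')

lemma limit_nonneg {ρ : ℝ} (h0 : 0 < ρ) (h1 : ρ < 1) {Sg : ℝ} {S : ℕ → ℝ}
    (hS : ∀ L : ℕ, Filter.Tendsto (fun L' : ℕ => SigmaTwo ρ L L') Filter.atTop (nhds (S L)))
    (hSg : Filter.Tendsto S Filter.atTop (nhds Sg)) : 0 ≤ Sg :=
  ge_of_tendsto' hSg fun L => ge_of_tendsto' (hS L) fun L' => sigma_nonneg h0 h1 L L'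

/-- A function charging only configurations with a given occupied pair has Dirichlet form at least
the interface energy. -/
lemma dirichlet_ge {ρ : ℝ} (h0 : 0 < ρ) (h1 : ρ < 1) {Sg : ℝ}
    (hs : ∀ L L', Sg ≤ SigmaTwo ρ L L') {N p : ℕ} (hp : p + 2 ≤ N) {g : Config N → ℝ}
    (hg0 : ∀ η, 0 ≤ g η)
    (hg : ∀ η, g η ≠ 0 → occAt η 0 0 (p + 1) = 1 ∧ occAt η 0 0 (p + 2) = 1) :
    Sg * _root_.expect ρ (fun η => g η ^ 2) ≤ dirichlet KCM.fa2 ρ g := by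
  set c := _root_.expect ρ (fun η => g η ^ 2) with hc
  have hc0 : 0 ≤ c := ex_nonneg h0 h1 fun η => sq_nonneg _
  rcases hc0.eq_or_lt with h | h
  · rw [← h, mul_zero]; exact dirichlet_nonneg h0 h1 g
  · have hsc : 0 < Real.sqrt c := Real.sqrt_pos.2 h
    have hA : Adm ρ N p (fun η => (Real.sqrt c)⁻¹ * g η) := by
      refine ⟨fun η => mul_nonneg (inv_nonneg.2 hsc.le) (hg0 η), ?_, ?_⟩
      · simp only [mul_pow]
        rw [ex_mul, ← hc, inv_pow, Real.sq_sqrt hc0, inv_mul_cancel₀ h.ne']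
      · intro η hη
        exact hg η (fun e => hη (by simp [e]))
    have hD : dirichlet KCM.fa2 ρ (fun η => (Real.sqrt c)⁻¹ * g η)
        = c⁻¹ * dirichlet KCM.fa2 ρ g := by
      rw [dirichlet_eq, dirichlet_eq, Finset.mul_sum]
      refine Finset.sum_congr rfl fun i _ => ?_
      unfold dirAt
      rw [← ex_mul]
      refine ex_congr fun η => ?_
      rw [← mul_sub, mul_pow, inv_pow, Real.sq_sqrt hc0]; ring
    have := (hs p (N - p - 2)).trans (sigma_le_of_adm h0 h1 (by omega) hA)
    rw [hD, inv_mul_eq_div, le_div_iff₀ h] at this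
    exact this

/-- Repeated insertion: the same energy and the same activity in arbitrarily large boxes. -/
lemma adm_extend {ρ : ℝ} (h0 : 0 < ρ) {n p : ℕ} {g : Config n → ℝ} (hg : Adm ρ n p g)
    (hp : p + 2 ≤ n) {N : ℕ} (hN : n ≤ N) :
    ∃ G : Config N → ℝ, Adm ρ N p G ∧ dirichlet KCM.fa2 ρ G = dirichlet KCM.fa2 ρ g ∧
      _root_.expect ρ (fun η => G η ^ 2 * escRate KCM.fa2 ρ η)
        = _root_.expect ρ (fun η => g η ^ 2 * escRate KCM.fa2 ρ η) := by
  induction N, hN using Nat.le_induction with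
  | base => exact ⟨g, hg, rfl, rfl⟩
  | succ N hN ih =>
    obtain ⟨G, hG, hD, hH⟩ := ih
    obtain ⟨G', hG', -, hD', hH'⟩ := adm_insert h0 hG (by omega)
    exact ⟨G', hG', hD'.trans hD, hH'.trans hH⟩

/-! ### The variational formula -/

lemma phi_values_le {ρ : ℝ} (h0 : 0 < ρ) (h1 : ρ < 1) {N : ℕ} (lam : ℝ)
    {f : Config N → ℝ} (hf : ∀ η, 0 ≤ f η) :
    (Real.exp lam - 1) * _root_.expect ρ (fun η => f η * escRate KCM.fa2 ρ η)
        - Real.exp lam * dirichlet KCM.fa2 ρ (fun η => Real.sqrt (f η))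
      ≤ - Real.exp lam * (-lam * _root_.expect ρ (fun η => f η * escRate KCM.fa2 ρ η)
        + dirichlet KCM.fa2 ρ (fun η => Real.sqrt (f η))) := by
  have hA : 0 ≤ _root_.expect ρ (fun η => f η * escRate KCM.fa2 ρ η) :=
    ex_nonneg h0 h1 fun η => mul_nonneg (hf η) (escRate_nonneg h0 h1 η)
  have he : Real.exp lam - 1 ≤ Real.exp lam * lam := by
    have h2 := Real.add_one_le_exp (-lam)
    have h3 : Real.exp lam * Real.exp (-lam) = 1 := by rw [← Real.exp_add]; simp
    nlinarith [Real.exp_pos lam]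
  nlinarith [mul_le_mul_of_nonneg_right he hA]

lemma phi_bddAbove {ρ : ℝ} (h0 : 0 < ρ) (h1 : ρ < 1) {N : ℕ} {lam : ℝ} (hl : lam ≤ 0) :
    BddAbove { x | ∃ f : Config N → ℝ, (∀ η, 0 ≤ f η) ∧ _root_.expect ρ f = 1 ∧
      x = (Real.exp lam - 1) * _root_.expect ρ (fun η => f η * escRate KCM.fa2 ρ η)
        - Real.exp lam * dirichlet KCM.fa2 ρ (fun η => Real.sqrt (f η)) } := by
  refine ⟨0, ?_⟩
  rintro x ⟨f, hf, -, rfl⟩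
  refine (phi_values_le h0 h1 lam hf).trans ?_
  have hA : 0 ≤ _root_.expect ρ (fun η => f η * escRate KCM.fa2 ρ η) :=
    ex_nonneg h0 h1 fun η => mul_nonneg (hf η) (escRate_nonneg h0 h1 η)
  rw [neg_mul, neg_nonpos]
  exact mul_nonneg (Real.exp_pos _).le
    (add_nonneg (mul_nonneg (neg_nonneg.2 hl) hA) (dirichlet_nonneg h0 h1 _))

lemma phi_ge {ρ : ℝ} (h0 : 0 < ρ) (h1 : ρ < 1) {N p : ℕ} {lam : ℝ} (hl : lam ≤ 0)
    {g : Config N → ℝ} (hg : Adm ρ N p g) :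
    (Real.exp lam - 1) * _root_.expect ρ (fun η => g η ^ 2 * escRate KCM.fa2 ρ η)
      - Real.exp lam * dirichlet KCM.fa2 ρ g ≤ phi KCM.fa2 ρ N lam := by
  refine le_csSup (phi_bddAbove h0 h1 hl) ⟨fun η => g η ^ 2, fun η => sq_nonneg _, hg.2.1, ?_⟩
  simp only [Real.sqrt_sq (hg.1 _)]

/-- Lower bound: every interface energy is eventually attainable, up to a vanishing error. -/
lemma phi_lower {ρ : ℝ} (h0 : 0 < ρ) (h1 : ρ < 1) {α : ℝ} (hα : α ≤ 0) {L L' : ℕ} {c : ℝ}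
    (hc : SigmaTwo ρ L L' < c) : ∀ᶠ N : ℕ in atTop, -c < phi KCM.fa2 ρ N (α / N) := by
  obtain ⟨g, hg, hgc⟩ : ∃ g, Adm ρ (L + L' + 2) L g ∧ dirichlet KCM.fa2 ρ g < c := by
    by_contra hcon
    push Not at hcon
    exact absurd (le_sigma h0 h1 hcon) (not_le.2 hc)
  set A := _root_.expect ρ (fun η => g η ^ 2 * escRate KCM.fa2 ρ η) with hA
  have ht : Tendsto (fun N : ℕ => (Real.exp (α / N) - 1) * A
      - Real.exp (α / N) * dirichlet KCM.fa2 ρ g) atTop (nhds ((Real.exp 0 - 1) * A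
      - Real.exp 0 * dirichlet KCM.fa2 ρ g)) := by
    have h : Tendsto (fun N : ℕ => Real.exp (α / N)) atTop (nhds (Real.exp 0)) :=
      (Real.continuous_exp.tendsto 0).comp (tendsto_const_div_atTop_nhds_zero_nat α)
    exact ((h.sub_const 1).mul_const A).sub (h.mul_const _)
  have hlt : -c < (Real.exp 0 - 1) * A - Real.exp 0 * dirichlet KCM.fa2 ρ g := by
    rw [Real.exp_zero]; linarith
  filter_upwards [ht.eventually_const_lt hlt, eventually_ge_atTop (L + L' + 2)] with N h hN
  obtain ⟨G, hG, hD, hH⟩ := adm_extend h0 hg (by omega) hN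
  refine h.trans_le ?_
  rw [hA, ← hH, ← hD]
  exact phi_ge h0 h1 (div_nonpos_of_nonpos_of_nonneg hα (Nat.cast_nonneg N)) hG


/-! ### Spectral gap on a block with filled boundaries -/

lemma occAt_one_succ {N : ℕ} (η : Config N) {k : ℕ} (h : k < N) :
    occAt η 1 1 (k + 1) = if η ⟨k, h⟩ then 1 else 0 := by
  have : k + 1 ≤ N := h
  unfold occAt
  simp [this]

lemma occAt_one_beyond {N : ℕ} (η : Config N) {k : ℕ} (h : N < k) : occAt η 1 1 k = 1 := by
  unfold occAt
  simp [not_le.2 h]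

lemma occAt_one_true {N : ℕ} (η : Config N) {k : ℕ} (h : k < N)
    (h' : occAt η 1 1 (k + 1) = 1) : η ⟨k, h⟩ = true := by
  rw [occAt_one_succ η h] at h'
  by_contra e
  simp [e] at h'

/-- A configuration that is neither empty nor full has an occupied site that may be emptied. -/
lemma exists_removable {m : ℕ} (η : Config m) {j₀ : Fin m} (hj : η j₀ = true)
    (hfull : η ≠ fun _ => true) : ∃ j, η j = true ∧ rr 1 η j = 1 := by
  by_contra hcon
  push Not at hcon
  -- otherwise occupation propagates from `j₀` in both directions
  have step : ∀ k : ℕ, k < m → occAt η 1 1 (k + 1) = 1 →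
      occAt η 1 1 k = 1 ∧ occAt η 1 1 (k + 2) = 1 := by
    intro k hk h
    have h2 : rr 1 η ⟨k, hk⟩ = 0 :=
      (rr_mem (Or.inr rfl) _ _).resolve_right (hcon _ (occAt_one_true η hk h))
    unfold rr at h2
    rcases occAt_mem η (bl := 1) (br := 1) (Or.inr rfl) (Or.inr rfl) k with a | a <;>
      rcases occAt_mem η (bl := 1) (br := 1) (Or.inr rfl) (Or.inr rfl) (k + 2) with b | b <;>
      simp_all
  have right : ∀ k : ℕ, occAt η 1 1 (j₀.1 + 1 + k) = 1 := by
    intro k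
    induction k with
    | zero => rw [add_zero, occAt_one_succ η j₀.2]; simp [hj]
    | succ k ih =>
      by_cases h : j₀.1 + k < m
      · rw [show j₀.1 + 1 + (k + 1) = j₀.1 + k + 2 by ring]
        exact (step _ h (by rwa [show j₀.1 + k + 1 = j₀.1 + 1 + k by ring])).2
      · exact occAt_one_beyond η (by omega)
  have left : ∀ k : ℕ, k ≤ j₀.1 + 1 → occAt η 1 1 (j₀.1 + 1 - k) = 1 := by
    intro k
    induction k with
    | zero => intro _; exact right 0
    | succ k ih =>
      intro hk
      have h2 := j₀.2
      refine (step (j₀.1 + 1 - (k + 1)) (by omega) ?_).1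
      rw [show j₀.1 + 1 - (k + 1) + 1 = j₀.1 + 1 - k by omega]
      exact ih (by omega)
  apply hfull
  funext i
  apply occAt_one_true η i.2
  by_cases h : i.1 ≤ j₀.1
  · have := left (j₀.1 - i.1) (by omega)
    rwa [show j₀.1 + 1 - (j₀.1 - i.1) = i.1 + 1 by omega] at this
  · have := right (i.1 - j₀.1)
    rwa [show j₀.1 + 1 + (i.1 - j₀.1) = i.1 + 1 by omega] at this

/-- Any configuration other than the full one is connected to the empty one by allowed moves, hence
the Dirichlet form controls the corresponding increment. -/
lemma path_bound {ρ : ℝ} (h0 : 0 < ρ) (h1 : ρ < 1) {m : ℕ} (n : ℕ) :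
    ∀ η : Config m, η ≠ (fun _ => true) → (Finset.univ.filter fun i => η i = true).card = n →
    ∃ C : ℝ, 0 ≤ C ∧ ∀ g : Config m → ℝ,
      (g η - g fun _ => false) ^ 2 ≤ C * ∑ i, dirAt 1 ρ g i := by
  induction n using Nat.strong_induction_on with
  | _ n ih =>
  intro η hη hn
  by_cases he : ∃ j₀, η j₀ = true
  · obtain ⟨j₀, hj₀⟩ := he
    obtain ⟨j, hj, hr⟩ := exists_removable η hj₀ hη
    have hne : flipAt η j ≠ fun _ => true := by
      intro e
      have := congrFun e j
      rw [flipAt_same, hj] at this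
      simp at this
    have hlt : (Finset.univ.filter fun i => flipAt η j i = true).card < n := by
      rw [← hn]
      apply Finset.card_lt_card
      rw [Finset.ssubset_iff_of_subset]
      · exact ⟨j, by simp [hj], by simp [flipAt_same, hj]⟩
      · intro i hi
        have hi' : flipAt η j i = true := by simpa using hi
        by_cases e : i = j
        · subst e; rw [flipAt_same, hj] at hi'; simp at hi'
        · rw [flipAt_ne _ e] at hi'; simpa using hi'
    obtain ⟨C, hC, hCg⟩ := ih _ hlt (flipAt η j) hne rfl
    have hw : 0 < bern ρ η * rate 1 ρ η j := by
      unfold rate; rw [hr, one_mul]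
      exact mul_pos (bern_pos h0 h1 _) (wt_pos h0 h1 _)
    refine ⟨2 * (bern ρ η * rate 1 ρ η j)⁻¹ + 2 * C, by positivity, fun g => ?_⟩
    have hd : bern ρ η * rate 1 ρ η j * (g (flipAt η j) - g η) ^ 2 ≤ ∑ i, dirAt 1 ρ g i := by
      refine le_trans ?_ (Finset.single_le_sum
        (fun i _ => dirAt_nonneg (Or.inr rfl) h0 h1 g i) (Finset.mem_univ j))
      unfold dirAt _root_.expect
      rw [mul_assoc]
      exact Finset.single_le_sum
        (f := fun η => bern ρ η * (rate 1 ρ η j * (g (flipAt η j) - g η) ^ 2))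
        (fun η _ => mul_nonneg (bern_pos h0 h1 η).le
          (mul_nonneg (rate_nonneg (Or.inr rfl) h0 h1 η j) (sq_nonneg _))) (Finset.mem_univ η)
    have hd' : (g (flipAt η j) - g η) ^ 2
        ≤ (bern ρ η * rate 1 ρ η j)⁻¹ * ∑ i, dirAt 1 ρ g i := by
      rw [inv_mul_eq_div, le_div_iff₀ hw, mul_comm]; exact hd
    have h3 := hCg g
    nlinarith [sq_nonneg ((g (flipAt η j) - g η) + (g (flipAt η j) - g fun _ => false))]
  · refine ⟨0, le_rfl, fun g => ?_⟩
    have : η = fun _ => false := by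
      funext i
      have := not_exists.1 he i
      simpa using this
    rw [this]; simp

/-- The projection of `g` on the kernel of the block Dirichlet form: the kernel is spanned by the
indicator of the full configuration and that of its complement. -/
noncomputable def proj {m : ℕ} (g : Config m → ℝ) (η : Config m) : ℝ :=
  if η = (fun _ => true) then g η else g fun _ => false

/-- Spectral gap of the block dynamics with filled boundaries, whose only frozen configuration is the
full one. -/
lemma poincare {ρ : ℝ} (h0 : 0 < ρ) (h1 : ρ < 1) (m : ℕ) :
    ∃ C : ℝ, 0 ≤ C ∧ ∀ g : Config m → ℝ,
      _root_.expect ρ (fun η => (g η - proj g η) ^ 2) ≤ C * ∑ i, dirAt 1 ρ g i := by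
  have h : ∀ η : Config m, ∃ C : ℝ, 0 ≤ C ∧ ∀ g : Config m → ℝ,
      (g η - proj g η) ^ 2 ≤ C * ∑ i, dirAt 1 ρ g i := by
    intro η
    by_cases hη : η = fun _ => true
    · exact ⟨0, le_rfl, fun g => by simp [proj, hη]⟩
    · obtain ⟨C, hC, h⟩ := path_bound h0 h1 _ η hη rfl
      exact ⟨C, hC, fun g => by simpa [proj, hη] using h g⟩
  choose C hC hg using h
  refine ⟨∑ η, bern ρ η * C η, Finset.sum_nonneg fun η _ =>
    mul_nonneg (bern_pos h0 h1 η).le (hC η), fun g => ?_⟩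
  rw [Finset.sum_mul]
  refine Finset.sum_le_sum fun η _ => ?_
  rw [mul_assoc]
  exact mul_le_mul_of_nonneg_left (hg η g) (bern_pos h0 h1 η).le

/-- Mean activity at an interior site. -/
lemma ex_rate_interior (ρ : ℝ) {m : ℕ} (i j k : Fin m) (hi : i.1 + 1 = j.1)
    (hk : j.1 + 1 = k.1) :
    _root_.expect ρ (fun η : Config m => rate 1 ρ η j) = 2 * ρ * (1 - ρ) * (1 - ρ ^ 2) := by
  have hF : ∀ η : Config m, rate 1 ρ η j
      = (1 - (if η i then 1 else 0) * (if η k then 1 else 0)) * wt ρ (!η j) := by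
    intro η
    unfold rate rr
    rw [← hi, occAt_one_succ η i.2, show i.1 + 1 + 2 = k.1 + 1 by omega, occAt_one_succ η k.2]
  have hij : i ≠ j := fun e => by rw [e] at hi; omega
  have hjk : j ≠ k := fun e => by rw [e] at hk; omega
  have hik : i ≠ k := fun e => by rw [e] at hi; omega
  rw [ex_congr hF, ex_resample ρ i, ex_resample ρ j, ex_resample ρ k]
  simp only [Function.update_self, Function.update_of_ne hij.symm,
    Function.update_of_ne hjk.symm, Function.update_of_ne hik.symm, wt, if_true, Bool.not_true, Bool.not_false,
    Bool.false_eq_true, if_false]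
  rw [ex_const]
  ring

lemma sum_ex_rate {ρ : ℝ} (h0 : 0 < ρ) (h1 : ρ < 1) (n : ℕ) :
    n * (2 * ρ * (1 - ρ) * (1 - ρ ^ 2))
      ≤ ∑ j, _root_.expect ρ (fun η : Config (n + 2) => rate 1 ρ η j) := by
  rw [Fin.sum_univ_succ, Fin.sum_univ_castSucc]
  have hn : ∀ j : Fin (n + 2), 0 ≤ _root_.expect ρ (fun η : Config (n + 2) => rate 1 ρ η j) :=
    fun j => ex_nonneg h0 h1 fun η => rate_nonneg (Or.inr rfl) h0 h1 η j
  have : ∑ j : Fin n, _root_.expect ρ (fun η : Config (n + 2) => rate 1 ρ η j.castSucc.succ)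
      = n * (2 * ρ * (1 - ρ) * (1 - ρ ^ 2)) := by
    rw [Finset.sum_congr rfl (fun j _ => ex_rate_interior ρ j.castSucc.castSucc j.castSucc.succ
      j.succ.succ (by simp) (by simp))]
    simp
  rw [this]
  linarith [hn 0, hn (Fin.last n).succ]

/-- The potential on a block: activity plus a penalty on the full configuration. -/
noncomputable def pot (A B ρ : ℝ) {m : ℕ} (ξ : Config m) : ℝ :=
  A * ∑ j, rate 1 ρ ξ j + if ξ = (fun _ => true) then B else 0

/-- First-order perturbation theory on a block: once the Dirichlet form has a large prefactor, the
ground-state energy is at least the minimum of the potential over the kernel. -/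
lemma block_bound {ρ : ℝ} (h0 : 0 < ρ) (h1 : ρ < 1) {n : ℕ} {A B Sg : ℝ} (hA0 : 0 ≤ A)
    (hS0 : 0 ≤ Sg) (hA : Sg < A * (n * (2 * ρ * (1 - ρ) * (1 - ρ ^ 2)))) (hB : Sg < B) :
    ∃ K : ℝ, 0 ≤ K ∧ ∀ g : Config (n + 2) → ℝ,
      Sg * _root_.expect ρ (fun η => g η ^ 2) ≤ K * ∑ i, dirAt 1 ρ g i
        + _root_.expect ρ (fun η => pot A B ρ η * g η ^ 2) := by
  obtain ⟨C, hC, hP⟩ := poincare h0 h1 (n + 2)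
  set u : Config (n + 2) := fun _ => true with hu
  set E := ∑ j, _root_.expect ρ (fun η : Config (n + 2) => rate 1 ρ η j) with hE
  have hAE : Sg < A * E := hA.trans_le (mul_le_mul_of_nonneg_left (sum_ex_rate h0 h1 n) hA0)
  set κ := min (A * E) B - Sg with hκ
  have hκ0 : 0 < κ := sub_pos.2 (lt_min hAE hB)
  have hκ1 : Sg + κ ≤ A * E := by rw [hκ]; linarith [min_le_left (A * E) B]
  have hκ2 : Sg + κ ≤ B := by rw [hκ]; linarith [min_le_right (A * E) B]
  set Wm := ∑ ξ : Config (n + 2), |pot A B ρ ξ - Sg| with hWm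
  have hW : ∀ ξ : Config (n + 2), |pot A B ρ ξ - Sg| ≤ Wm := fun ξ =>
    Finset.single_le_sum (f := fun ξ => |pot A B ρ ξ - Sg|) (fun _ _ => abs_nonneg _)
      (Finset.mem_univ ξ)
  have hWm0 : 0 ≤ Wm := Finset.sum_nonneg fun _ _ => abs_nonneg _
  -- the full configuration is frozen
  have hru : ∀ j, rate 1 ρ u j = 0 := by
    intro j
    have : ∀ k, occAt u 1 1 k = 1 := by
      intro k; unfold occAt; simp [hu]
    unfold rate rr; simp [this]
  have hbu := bern_pos h0 h1 u
  have hbu1 : bern ρ u ≤ 1 := by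
    rw [← sum_bern ρ (n + 2)]
    exact Finset.single_le_sum (f := fun ξ => bern ρ ξ)
      (fun ξ _ => (bern_pos h0 h1 ξ).le) (Finset.mem_univ u)
  refine ⟨(Wm ^ 2 / κ + Wm) * C, by positivity, fun g => ?_⟩
  have hker : 0 ≤ _root_.expect ρ (fun η => (pot A B ρ η - Sg - κ) * proj g η ^ 2) := by
    set a := g fun _ => false
    have e : ∀ η : Config (n + 2), (pot A B ρ η - Sg - κ) * proj g η ^ 2
        = a ^ 2 * (A * ∑ j, rate 1 ρ η j - (Sg + κ))
          + (if η = u then (B - Sg - κ) * g u ^ 2 + a ^ 2 * (Sg + κ) else 0) := by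
      intro η
      unfold pot proj
      by_cases h : η = u
      · subst h
        rw [if_pos hu, if_pos hu, if_pos rfl]
        simp only [hru, Finset.sum_const_zero]; ring
      · have h' : ¬ η = fun _ => true := h
        simp only [h, h', if_false]; ring
    rw [ex_congr e, ex_add, ex_mul, ex_sub, ex_mul, ex_sum, ex_const, ← hE]
    have e2 : ∀ x : ℝ, _root_.expect ρ (fun η : Config (n + 2) => if η = u then x else 0)
        = bern ρ u * x := by
      intro x; unfold _root_.expect; simp
    rw [e2]
    have : 0 ≤ (B - Sg - κ) * g u ^ 2 + a ^ 2 * (Sg + κ) :=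
      add_nonneg (mul_nonneg (by linarith) (sq_nonneg _))
        (mul_nonneg (sq_nonneg _) (by linarith))
    exact add_nonneg (mul_nonneg (sq_nonneg _) (by linarith)) (mul_nonneg hbu.le this)
  have hpt : ∀ η, (pot A B ρ η - Sg - κ) * proj g η ^ 2
      - (Wm ^ 2 / κ + Wm) * (g η - proj g η) ^ 2 ≤ (pot A B ρ η - Sg) * g η ^ 2 := by
    intro η
    obtain ⟨l, r⟩ := abs_le.1 (hW η)
    generalize pot A B ρ η - Sg = x at *
    obtain ⟨w, hw⟩ : ∃ w, w = g η - proj g η := ⟨_, rfl⟩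
    have hg : g η = proj g η + w := by rw [hw]; ring
    rw [← hw, hg]
    generalize proj g η = y
    have s1 : 0 ≤ κ * (y + x / κ * w) ^ 2 := by positivity
    have s2 : κ * (y + x / κ * w) ^ 2 = κ * y ^ 2 + 2 * x * y * w + x ^ 2 / κ * w ^ 2 := by
      field_simp; ring
    have s3 : x ^ 2 / κ * w ^ 2 ≤ Wm ^ 2 / κ * w ^ 2 := by
      apply mul_le_mul_of_nonneg_right _ (sq_nonneg _)
      exact div_le_div_of_nonneg_right (sq_le_sq' l r) hκ0.le
    nlinarith [mul_nonneg (by linarith : 0 ≤ x + Wm) (sq_nonneg w)]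
  have h3 := ex_mono h0 h1 hpt
  rw [ex_sub, ex_mul] at h3
  have h4 : _root_.expect ρ (fun η => (pot A B ρ η - Sg) * g η ^ 2)
      = _root_.expect ρ (fun η => pot A B ρ η * g η ^ 2)
        - Sg * _root_.expect ρ (fun η => g η ^ 2) := by
    rw [← ex_mul, ← ex_sub]
    exact ex_congr fun η => by ring
  have h5 := mul_le_mul_of_nonneg_left (hP g) (by positivity : 0 ≤ Wm ^ 2 / κ + Wm)
  rw [h4] at h3
  rw [mul_assoc]
  linarith


/-! ### Localisation to a block -/

/-- The `j`-th site of the block of length `m` starting at `o`. -/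
def site {N m o : ℕ} (h : o + m ≤ N) (j : Fin m) : Fin N := ⟨o + j.1, by omega⟩

/-- Replace the restriction of `η` to the block of length `m` starting at `o` by `ξ`. -/
def repl {N m : ℕ} (o : ℕ) (η : Config N) (ξ : Config m) : Config N := fun i =>
  if h : o ≤ i.1 ∧ i.1 < o + m then ξ ⟨i.1 - o, by omega⟩ else η i

/-- The restriction of `η` to the block. -/
def restr {N m o : ℕ} (h : o + m ≤ N) (η : Config N) : Config m := fun j => η (site h j)

lemma repl_site {N m o : ℕ} (h : o + m ≤ N) (η : Config N) (ξ : Config m) (j : Fin m) :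
    repl o η ξ (site h j) = ξ j := by
  have : o ≤ (site h j).1 ∧ (site h j).1 < o + m := by simp [site]
  unfold repl
  rw [dif_pos this]
  congr 1
  apply Fin.ext; simp [site]

lemma restr_repl {N m o : ℕ} (h : o + m ≤ N) (η : Config N) (ξ : Config m) :
    restr h (repl o η ξ) = ξ := funext fun j => repl_site h η ξ j

lemma repl_out {N m o : ℕ} (η : Config N) (ξ : Config m) {i : Fin N}
    (h : ¬ (o ≤ i.1 ∧ i.1 < o + m)) : repl o η ξ i = η i := by
  unfold repl; rw [dif_neg h]

lemma exists_site {N m o : ℕ} (h : o + m ≤ N) {i : Fin N} (hi : o ≤ i.1 ∧ i.1 < o + m) :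
    ∃ j : Fin m, i = site h j :=
  ⟨⟨i.1 - o, by omega⟩, Fin.ext (by simp [site]; omega)⟩

lemma repl_repl {N m o : ℕ} (h : o + m ≤ N) (η : Config N) (ξ : Config m) :
    repl o (repl o η ξ) (restr h η) = η := by
  funext i
  by_cases hi : o ≤ i.1 ∧ i.1 < o + m
  · obtain ⟨j, rfl⟩ := exists_site h hi
    rw [repl_site]; rfl
  · rw [repl_out _ _ hi, repl_out _ _ hi]

lemma site_injective {N m o : ℕ} (h : o + m ≤ N) : Function.Injective (site h) := by
  intro a b e
  have := congrArg Fin.val e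
  simp only [site] at this
  apply Fin.ext; omega

lemma repl_flip {N m o : ℕ} (h : o + m ≤ N) (η : Config N) (ξ : Config m) (j : Fin m) :
    repl o η (flipAt ξ j) = flipAt (repl o η ξ) (site h j) := by
  funext i
  by_cases hi : o ≤ i.1 ∧ i.1 < o + m
  · obtain ⟨k, rfl⟩ := exists_site h hi
    rw [repl_site]
    by_cases e : k = j
    · subst e; rw [flipAt_same, flipAt_same, repl_site]
    · rw [flipAt_ne _ e, flipAt_ne _ (fun e' => e (site_injective h e')), repl_site]
  · have hne : i ≠ site h j := by
      rintro rfl; apply hi; simp [site]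
    rw [flipAt_ne _ hne, repl_out _ _ hi, repl_out _ _ hi]

lemma filter_block {N m o : ℕ} (h : o + m ≤ N) :
    Finset.univ.filter (fun i : Fin N => o ≤ i.1 ∧ i.1 < o + m)
      = Finset.univ.map ⟨site h, site_injective h⟩ := by
  ext i
  simp only [Finset.mem_filter, Finset.mem_univ, true_and, Finset.mem_map,
    Function.Embedding.coeFn_mk]
  constructor
  · intro hi
    obtain ⟨j, hj⟩ := exists_site h hi
    exact ⟨j, hj.symm⟩
  · rintro ⟨j, rfl⟩
    simp [site]

lemma prod_block {N m o : ℕ} (h : o + m ≤ N) (φ : Fin N → ℝ) :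
    ∏ i, φ i = (∏ j, φ (site h j))
      * ∏ i ∈ Finset.univ.filter (fun i : Fin N => ¬ (o ≤ i.1 ∧ i.1 < o + m)), φ i := by
  rw [← Finset.prod_filter_mul_prod_filter_not Finset.univ
    (fun i : Fin N => o ≤ i.1 ∧ i.1 < o + m)]
  congr 1
  rw [filter_block h, Finset.prod_map]
  rfl

/-- Resampling the whole block leaves the Bernoulli expectation unchanged. The pair
`(configuration, new block)` is mapped to `(configuration with new block, old block)` by a
weight-preserving involution. -/
lemma ex_repl (ρ : ℝ) {N m o : ℕ} (h : o + m ≤ N) (F : Config N → ℝ) :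
    _root_.expect ρ F
      = _root_.expect ρ (fun η => _root_.expect ρ (fun ξ : Config m => F (repl o η ξ))) := by
  let e : Config N × Config m ≃ Config N × Config m :=
    { toFun := fun x => (repl o x.1 x.2, restr h x.1)
      invFun := fun x => (repl o x.1 x.2, restr h x.1)
      left_inv := fun x => by simp [repl_repl, restr_repl]
      right_inv := fun x => by simp [repl_repl, restr_repl] }
  have hw : ∀ x : Config N × Config m,
      bern ρ (repl o x.1 x.2) * bern ρ (restr h x.1) = bern ρ x.1 * bern ρ x.2 := by
    rintro ⟨η, ξ⟩
    simp only [bern_eq]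
    rw [prod_block h, prod_block h (fun i => wt ρ (η i))]
    simp only [repl_site]
    have e3 : ∏ i ∈ Finset.univ.filter (fun i : Fin N => ¬ (o ≤ i.1 ∧ i.1 < o + m)),
        wt ρ (repl o η ξ i)
        = ∏ i ∈ Finset.univ.filter (fun i : Fin N => ¬ (o ≤ i.1 ∧ i.1 < o + m)), wt ρ (η i) :=
      Finset.prod_congr rfl fun i hi => by rw [repl_out η ξ (Finset.mem_filter.1 hi).2]
    rw [e3]
    unfold restr
    ring
  have h1 : _root_.expect ρ (fun η => _root_.expect ρ (fun ξ : Config m => F (repl o η ξ)))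
      = ∑ x : Config N × Config m, bern ρ (e x).1 * bern ρ (e x).2 * F (e x).1 := by
    unfold _root_.expect
    rw [Fintype.sum_prod_type]
    refine Finset.sum_congr rfl fun η _ => ?_
    rw [Finset.mul_sum]
    refine Finset.sum_congr rfl fun ξ _ => ?_
    simp only [e, Equiv.coe_fn_mk]
    rw [hw (η, ξ)]; ring
  rw [h1, Equiv.sum_comp e (fun x => bern ρ x.1 * bern ρ x.2 * F x.1), Fintype.sum_prod_type]
  unfold _root_.expect
  refine Finset.sum_congr rfl fun η _ => ?_
  calc bern ρ η * F η = bern ρ η * F η * ∑ ξ : Config m, bern ρ ξ := by rw [sum_bern, mul_one]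
    _ = _ := by
      rw [Finset.mul_sum]
      exact Finset.sum_congr rfl fun ξ _ => by ring

lemma occAt_repl_le {N m o : ℕ} (h : o + m ≤ N) (η : Config N) (ξ : Config m) (k : ℕ) :
    occAt (repl o η ξ) 0 0 (o + k) ≤ occAt ξ 1 1 k := by
  have hle : occAt (repl o η ξ) 0 0 (o + k) ≤ 1 := by
    rcases occAt_mem (repl o η ξ) (bl := 0) (br := 0) (Or.inl rfl) (Or.inl rfl) (o + k) with a | a
      <;> rw [a] <;> norm_num
  rcases Nat.eq_zero_or_pos k with rfl | hk
  · simpa [occAt] using hle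
  · by_cases hm : k ≤ m
    · obtain ⟨k, rfl⟩ : ∃ k', k = k' + 1 := ⟨k - 1, by omega⟩
      rw [occAt_one_succ ξ (by omega), ← add_assoc, occAt_succ _ (by omega : o + k < N)]
      unfold occ
      rw [show (⟨o + k, by omega⟩ : Fin N) = site h ⟨k, by omega⟩ from rfl, repl_site]
    · rw [occAt_one_beyond ξ (by omega)]; exact hle

/-- The block dynamics with filled boundaries is slower than the dynamics in the whole box. -/
lemma rate_repl_ge {ρ : ℝ} (h0 : 0 < ρ) (h1 : ρ < 1) {N m o : ℕ} (h : o + m ≤ N) (η : Config N)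
    (ξ : Config m) (j : Fin m) : rate 1 ρ ξ j ≤ rate 0 ρ (repl o η ξ) (site h j) := by
  unfold rate
  rw [repl_site]
  refine mul_le_mul_of_nonneg_right ?_ (wt_pos h0 h1 _).le
  unfold rr
  have a := occAt_repl_le h η ξ j.1
  have b := occAt_repl_le h η ξ (j.1 + 2)
  have ha : 0 ≤ occAt ξ 1 1 j.1 := by
    rcases occAt_mem ξ (bl := 1) (br := 1) (Or.inr rfl) (Or.inr rfl) j.1 with a | a <;> rw [a]
    norm_num
  have hb : 0 ≤ occAt (repl o η ξ) 0 0 (o + (j.1 + 2)) := by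
    rcases occAt_mem (repl o η ξ) (bl := 0) (br := 0) (Or.inl rfl) (Or.inl rfl) (o + (j.1 + 2))
      with a | a <;> rw [a]
    norm_num
  have := mul_le_mul a b hb ha
  simp only [site]
  rw [add_assoc]
  linarith

/-- An inequality for the block with filled boundaries, applied conditionally on the configuration
outside the block, gives an inequality for the dynamics in the whole box. -/
lemma local_bound {ρ : ℝ} (h0 : 0 < ρ) (h1 : ρ < 1) {N m o : ℕ} (h : o + m ≤ N)
    {A B Sg K : ℝ} (hA : 0 ≤ A) (hK : 0 ≤ K)
    (hblk : ∀ g : Config m → ℝ, Sg * _root_.expect ρ (fun η => g η ^ 2)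
      ≤ K * ∑ i, dirAt 1 ρ g i + _root_.expect ρ (fun η => pot A B ρ η * g η ^ 2))
    (G : Config N → ℝ) :
    Sg * _root_.expect ρ (fun η => G η ^ 2) ≤ K * ∑ j, dirAt 0 ρ G (site h j)
      + _root_.expect ρ (fun η => (A * ∑ j, rate 0 ρ η (site h j)
        + if (∀ j : Fin m, η (site h j) = true) then B else 0) * G η ^ 2) := by
  have hD : ∀ j, _root_.expect ρ (fun η => dirAt 1 ρ (fun ξ : Config m => G (repl o η ξ)) j)
      ≤ dirAt 0 ρ G (site h j) := by
    intro j
    unfold dirAt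
    rw [ex_repl ρ h (fun η => rate 0 ρ η (site h j) * (G (flipAt η (site h j)) - G η) ^ 2)]
    refine ex_mono h0 h1 fun η => ex_mono h0 h1 fun ξ => ?_
    simp only [repl_flip h]
    exact mul_le_mul_of_nonneg_right (rate_repl_ge h0 h1 h η ξ j) (sq_nonneg _)
  have hP : _root_.expect ρ (fun η => _root_.expect ρ
        (fun ξ : Config m => pot A B ρ ξ * G (repl o η ξ) ^ 2))
      ≤ _root_.expect ρ (fun η => (A * ∑ j, rate 0 ρ η (site h j)
        + if (∀ j : Fin m, η (site h j) = true) then B else 0) * G η ^ 2) := by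
    rw [ex_repl ρ h (fun η => (A * ∑ j, rate 0 ρ η (site h j)
        + if (∀ j : Fin m, η (site h j) = true) then B else 0) * G η ^ 2)]
    refine ex_mono h0 h1 fun η => ex_mono h0 h1 fun ξ => ?_
    refine mul_le_mul_of_nonneg_right ?_ (sq_nonneg _)
    unfold pot
    simp only [repl_site]
    have : (ξ = fun _ => true) ↔ ∀ j, ξ j = true := funext_iff
    simp only [this]
    exact add_le_add (mul_le_mul_of_nonneg_left
      (Finset.sum_le_sum fun j _ => rate_repl_ge h0 h1 h η ξ j) hA) le_rfl
  have hI := ex_mono h0 h1 (fun η : Config N => hblk (fun ξ => G (repl o η ξ)))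
  rw [ex_mul, ← ex_repl ρ h (fun η => G η ^ 2), ex_add, ex_mul, ex_sum] at hI
  refine hI.trans (add_le_add (mul_le_mul_of_nonneg_left ?_ hK) hP)
  exact Finset.sum_le_sum fun j _ => hD j


/-! ### Localisation of the Dirichlet form -/

/-- Pointwise form of the localisation error, for `χ a = v a / |v|`. -/
lemma ims_pointwise {ι : Type*} [Fintype ι] (v v' : ι → ℝ) {r g g' : ℝ} (hr : 0 < r)
    (hv : r ≤ ∑ a, v a ^ 2) (hv' : r ≤ ∑ a, v' a ^ 2) (hg : 0 ≤ g) (hg' : 0 ≤ g') :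
    ∑ a, (v' a / Real.sqrt (∑ a, v' a ^ 2) * g' - v a / Real.sqrt (∑ a, v a ^ 2) * g) ^ 2
      ≤ (g' - g) ^ 2 + (∑ a, (v' a - v a) ^ 2) * ((g' ^ 2 + g ^ 2) / (2 * r)) := by
  set s := ∑ a, v a ^ 2 with hs
  set s' := ∑ a, v' a ^ 2 with hs'
  set P := ∑ a, v a * v' a with hP
  have hR : r ≤ Real.sqrt s * Real.sqrt s' := by
    calc r = Real.sqrt r * Real.sqrt r := (Real.mul_self_sqrt hr.le).symm
      _ ≤ _ := mul_le_mul (Real.sqrt_le_sqrt hv) (Real.sqrt_le_sqrt hv') (Real.sqrt_nonneg _)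
        (Real.sqrt_nonneg _)
  have hR0 : 0 < Real.sqrt s := Real.sqrt_pos.2 (hr.trans_le hv)
  have hR0' : 0 < Real.sqrt s' := Real.sqrt_pos.2 (hr.trans_le hv')
  have e1 : Real.sqrt s ^ 2 = s := Real.sq_sqrt (hr.le.trans hv)
  have e2 : Real.sqrt s' ^ 2 = s' := Real.sq_sqrt (hr.le.trans hv')
  set R := Real.sqrt s
  set R' := Real.sqrt s'
  have hD : ∑ a, (v' a - v a) ^ 2 = R' ^ 2 + R ^ 2 - 2 * P := by
    rw [e1, e2, hs, hs', hP, Finset.mul_sum, ← Finset.sum_add_distrib, ← Finset.sum_sub_distrib]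
    exact Finset.sum_congr rfl fun a _ => by ring
  have hL : ∑ a, (v' a / R' * g' - v a / R * g) ^ 2
      = (g' / R') ^ 2 * R' ^ 2 + (g / R) ^ 2 * R ^ 2 - 2 * (g / R) * (g' / R') * P := by
    rw [e1, e2, hs, hs', hP, Finset.mul_sum, Finset.mul_sum, Finset.mul_sum,
      ← Finset.sum_add_distrib, ← Finset.sum_sub_distrib]
    exact Finset.sum_congr rfl fun a _ => by ring
  set D := ∑ a, (v' a - v a) ^ 2
  have hD0 : 0 ≤ D := Finset.sum_nonneg fun a _ => sq_nonneg _
  have hP2 : P = (R' ^ 2 + R ^ 2 - D) / 2 := by linarith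
  have hL2 : ∑ a, (v' a / R' * g' - v a / R * g) ^ 2
      = (g' - g) ^ 2 - g * g' * (R' - R) ^ 2 / (R * R') + g * g' * D / (R * R') := by
    rw [hL, hP2]; field_simp; ring
  have b1 : 0 ≤ g * g' * (R' - R) ^ 2 / (R * R') := by positivity
  have b2 : g * g' * D / (R * R') ≤ D * ((g' ^ 2 + g ^ 2) / (2 * r)) := by
    calc g * g' * D / (R * R') ≤ g * g' * D / r :=
          div_le_div_of_nonneg_left (by positivity) hr hR
      _ = D * ((2 * (g * g')) / (2 * r)) := by field_simp
      _ ≤ _ := by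
        refine mul_le_mul_of_nonneg_left ?_ hD0
        exact div_le_div_of_nonneg_right (by nlinarith [sq_nonneg (g' - g)]) (by positivity)
  rw [hL2]; linarith

/-- Localisation: cutting `g ≥ 0` with the quadratic partition of unity `v a / |v|` increases the
Dirichlet form by at most the gradient of `v`. -/
lemma ims {ρ : ℝ} (h0 : 0 < ρ) (h1 : ρ < 1) {N : ℕ} {ι : Type*} [Fintype ι]
    (v : ι → Config N → ℝ) {r : ℝ} (hr : 0 < r) (hv : ∀ η, r ≤ ∑ a, v a η ^ 2)
    {g : Config N → ℝ} (hg : ∀ η, 0 ≤ g η) (i : Fin N) :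
    ∑ a, dirAt 0 ρ (fun η => v a η / Real.sqrt (∑ a, v a η ^ 2) * g η) i
      ≤ dirAt 0 ρ g i + 1 / r * _root_.expect ρ (fun η => rate 0 ρ η i
        * ((∑ a, (v a (flipAt η i) - v a η) ^ 2) * g η ^ 2)) := by
  have hflip := ex_rate_flip 0 ρ i
    (fun η => (∑ a, (v a (flipAt η i) - v a η) ^ 2) * g η ^ 2)
  simp only [flipAt_flipAt] at hflip
  have hsym : ∀ η : Config N, ∑ a, (v a η - v a (flipAt η i)) ^ 2
      = ∑ a, (v a (flipAt η i) - v a η) ^ 2 := fun η =>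
    Finset.sum_congr rfl fun a _ => by ring
  simp only [hsym] at hflip
  unfold dirAt
  rw [← ex_sum]
  have : 1 / r * _root_.expect ρ (fun η => rate 0 ρ η i
        * ((∑ a, (v a (flipAt η i) - v a η) ^ 2) * g η ^ 2))
      = 1 / (2 * r) * _root_.expect ρ (fun η => rate 0 ρ η i
        * ((∑ a, (v a (flipAt η i) - v a η) ^ 2) * g (flipAt η i) ^ 2))
      + 1 / (2 * r) * _root_.expect ρ (fun η => rate 0 ρ η i
        * ((∑ a, (v a (flipAt η i) - v a η) ^ 2) * g η ^ 2)) := by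
    rw [hflip]; field_simp; ring
  rw [this, ← ex_mul, ← ex_mul, ← ex_add, ← ex_add]
  refine ex_mono h0 h1 fun η => ?_
  have := mul_le_mul_of_nonneg_left (ims_pointwise (fun a => v a η) (fun a => v a (flipAt η i)) hr
    (hv η) (hv _) (hg η) (hg (flipAt η i))) (rate_nonneg (Or.inl rfl) h0 h1 η i)
  rw [← Finset.mul_sum]
  refine this.trans (le_of_eq ?_)
  field_simp

/-! ### Cut-off functions detecting full windows -/

/-- Indicator that the window of `2 * j + 2` sites centred at the bond `(c, c + 1)` is full. -/
noncomputable def win (c j : ℕ) {N : ℕ} (η : Config N) : ℝ :=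
  if ∀ i : Fin N, c ≤ i.1 + j → i.1 ≤ c + 1 + j → η i = true then 1 else 0

/-- Average of the window indicators over the sizes `1, …, ℓ`: a cut-off which is `1` if the block
of radius `ℓ` is full, vanishes unless the central pair is full, and varies slowly. -/
noncomputable def hat (ℓ c : ℕ) {N : ℕ} (η : Config N) : ℝ :=
  (1 / (ℓ : ℝ)) * ∑ j ∈ Finset.Icc 1 ℓ, win c j η

lemma win_mem (c j : ℕ) {N : ℕ} (η : Config N) : win c j η = 0 ∨ win c j η = 1 := by
  unfold win; split_ifs <;> simp

lemma win_eq_one {c j N : ℕ} {η : Config N}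
    (h : ∀ i : Fin N, c ≤ i.1 + j → i.1 ≤ c + 1 + j → η i = true) : win c j η = 1 := if_pos h

lemma win_eq_zero {c j N : ℕ} {η : Config N} (i : Fin N) (h1 : c ≤ i.1 + j)
    (h2 : i.1 ≤ c + 1 + j) (h3 : η i ≠ true) : win c j η = 0 :=
  if_neg fun h => h3 (h i h1 h2)

lemma hat_full {ℓ c N : ℕ} (hℓ : 1 ≤ ℓ) {η : Config N}
    (h : ∀ i : Fin N, c ≤ i.1 + ℓ → i.1 ≤ c + 1 + ℓ → η i = true) : hat ℓ c η = 1 := by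
  unfold hat
  rw [Finset.sum_congr rfl (fun j hj => win_eq_one (η := η) fun i a b => h i
    (by have := (Finset.mem_Icc.1 hj).2; omega) (by have := (Finset.mem_Icc.1 hj).2; omega))]
  have : (ℓ : ℝ) ≠ 0 := by positivity
  simp [this]

lemma hat_nonneg (ℓ c : ℕ) {N : ℕ} (η : Config N) : 0 ≤ hat ℓ c η := by
  unfold hat
  refine mul_nonneg (by positivity) (Finset.sum_nonneg fun j _ => ?_)
  rcases win_mem c j η with h | h <;> rw [h]
  norm_num

lemma hat_ne_zero {ℓ c N : ℕ} {η : Config N} (h : hat ℓ c η ≠ 0) (i : Fin N) (hi : c ≤ i.1)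
    (hi' : i.1 ≤ c + 1) : η i = true := by
  by_contra hcon
  apply h
  unfold hat
  rw [Finset.sum_eq_zero fun j _ => win_eq_zero i (by omega) (by omega) hcon, mul_zero]

/-- At a site where the flip is allowed, the flip can change only the window ending at that site:
in a larger window the site is interior, and one of its neighbours is empty. -/
lemma win_flip {c j N : ℕ} {η : Config N} {i : Fin N} (hj : j ≤ c) (hN : c + 2 + j ≤ N)
    (hr : rr 0 η i ≠ 0) (h1 : c ≠ i.1 + j) (h2 : i.1 ≠ c + 1 + j) :
    win c j (flipAt η i) = win c j η := by
  by_cases hin : c ≤ i.1 + j ∧ i.1 ≤ c + 1 + j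
  · have hk1 : i.1 - 1 < N := by omega
    have hk2 : i.1 + 1 < N := by omega
    have hex : ∃ k : Fin N, k ≠ i ∧ (c ≤ k.1 + j ∧ k.1 ≤ c + 1 + j) ∧ η k ≠ true := by
      by_contra hcon
      push Not at hcon
      apply hr
      have a1 := hcon ⟨i.1 - 1, hk1⟩ (fun e => by have := congrArg Fin.val e; simp at this; omega)
        ⟨by simp; omega, by simp; omega⟩
      have a2 := hcon ⟨i.1 + 1, hk2⟩ (fun e => by have := congrArg Fin.val e; simp at this)
        ⟨by simp; omega, by simp; omega⟩
      unfold rr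
      obtain ⟨q, hq⟩ : ∃ q, i.1 = q + 1 := ⟨i.1 - 1, by omega⟩
      have b1 : occAt η 0 0 i.1 = 1 := by
        rw [hq, occAt_succ η (by omega : q < N)]
        unfold occ
        have : (⟨i.1 - 1, hk1⟩ : Fin N) = ⟨q, by omega⟩ := Fin.ext (by simp; omega)
        rw [← this, a1]; simp
      have b2 : occAt η 0 0 (i.1 + 2) = 1 := by
        rw [occAt_succ η hk2]
        unfold occ
        rw [a2]; simp
      rw [b1, b2]; norm_num
    obtain ⟨k, hki, hk, hek⟩ := hex
    rw [win_eq_zero k hk.1 hk.2 hek, win_eq_zero k hk.1 hk.2 (by rwa [flipAt_ne _ hki])]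
  · unfold win
    have : (∀ k : Fin N, c ≤ k.1 + j → k.1 ≤ c + 1 + j → flipAt η i k = true)
        ↔ ∀ k : Fin N, c ≤ k.1 + j → k.1 ≤ c + 1 + j → η k = true := by
      refine forall_congr' fun k => forall_congr' fun a => forall_congr' fun b => ?_
      rw [flipAt_ne]
      rintro rfl
      exact hin ⟨a, b⟩
    simp only [this]

/-- A permitted flip changes the cut-off by at most `1 / ℓ`, and only at sites of the block. -/
lemma hat_grad {ℓ c N : ℕ} (hc : ℓ ≤ c) (hN : c + 2 + ℓ ≤ N) {η : Config N} {i : Fin N}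
    (hr : rr 0 η i ≠ 0) : (hat ℓ c (flipAt η i) - hat ℓ c η) ^ 2
      ≤ if c ≤ i.1 + ℓ ∧ i.1 ≤ c + 1 + ℓ then 1 / (ℓ : ℝ) ^ 2 else 0 := by
  have hd : hat ℓ c (flipAt η i) - hat ℓ c η
      = (1 / (ℓ : ℝ)) * ∑ j ∈ Finset.Icc 1 ℓ, (win c j (flipAt η i) - win c j η) := by
    unfold hat; rw [Finset.sum_sub_distrib]; ring
  rw [hd]
  have hz : ∀ j ∈ Finset.Icc 1 ℓ, c ≠ i.1 + j → i.1 ≠ c + 1 + j →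
      win c j (flipAt η i) - win c j η = 0 := fun j hj a b => by
    have := (Finset.mem_Icc.1 hj).2
    rw [win_flip (by omega) (by omega) hr a b, sub_self]
  split_ifs with hin
    -- the only window that can change is the one ending at `i`
  · set j₀ := if i.1 ≤ c then c - i.1 else i.1 - c - 1 with hj₀
    have hz' : ∀ j ∈ Finset.Icc 1 ℓ, j ≠ j₀ → win c j (flipAt η i) - win c j η = 0 := by
      intro j hj hne
      have := (Finset.mem_Icc.1 hj).1
      refine hz j hj (fun a => hne ?_) (fun a => hne ?_)
      · rw [hj₀, if_pos (by omega)]; omega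
      · rw [hj₀, if_neg (by omega)]; omega
    have hle : (∑ j ∈ Finset.Icc 1 ℓ, (win c j (flipAt η i) - win c j η)) ^ 2 ≤ 1 := by
      by_cases hm : j₀ ∈ Finset.Icc 1 ℓ
      · rw [Finset.sum_eq_single_of_mem j₀ hm hz']
        rcases win_mem c j₀ η with a | a <;> rcases win_mem c j₀ (flipAt η i) with b | b <;>
          rw [a, b] <;> norm_num
      · rw [Finset.sum_eq_zero fun j hj => hz' j hj (fun e => hm (e ▸ hj))]; norm_num
    rw [mul_pow, div_pow, one_pow]
    exact mul_le_of_le_one_right (by positivity) hle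
  · rw [Finset.sum_eq_zero fun j hj => hz j hj (fun a => hin ?_) (fun a => hin ?_)]
    · norm_num
    all_goals
      have := (Finset.mem_Icc.1 hj).2
      omega

/-! ### The upper bound -/

lemma sum_site_le {N M m : ℕ} (h : ∀ b : Fin M, b.1 * m + m ≤ N) {f : Fin N → ℝ}
    (hf : ∀ i, 0 ≤ f i) : ∑ b, ∑ j, f (site (h b) j) ≤ ∑ i, f i := by
  have hinj : Function.Injective (fun x : Fin M × Fin m => site (h x.1) x.2) := by
    rintro ⟨b, j⟩ ⟨b', j'⟩ e
    have e1 : b.1 * m + j.1 = b'.1 * m + j'.1 := congrArg Fin.val e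
    have hj := j.2
    have hj' := j'.2
    have hb : b.1 = b'.1 := by
      have q1 : (b.1 * m + j.1) / m = b.1 := by
        rw [mul_comm, Nat.mul_add_div (by omega), Nat.div_eq_of_lt hj, add_zero]
      have q2 : (b'.1 * m + j'.1) / m = b'.1 := by
        rw [mul_comm, Nat.mul_add_div (by omega), Nat.div_eq_of_lt hj', add_zero]
      rw [← q1, ← q2, e1]
    have hjj : j.1 = j'.1 := by rw [hb] at e1; omega
    exact Prod.ext (Fin.ext hb) (Fin.ext hjj)
  rw [← Fintype.sum_prod_type' (fun b j => f (site (h b) j))]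
  have := Finset.sum_map (Finset.univ : Finset (Fin M × Fin m)) ⟨_, hinj⟩ f
  simp only [Function.Embedding.coeFn_mk] at this
  rw [← this]
  exact Finset.sum_le_sum_of_subset_of_nonneg (Finset.subset_univ _) fun i _ _ => hf i

/-- Estimate for the part of the state charging configurations with few full blocks: the average
over the blocks of the local inequality. -/
lemma none_bound {ρ : ℝ} (h0 : 0 < ρ) (h1 : ρ < 1) {N M m : ℕ} (hM : 1 ≤ M)
    (h : ∀ b : Fin M, b.1 * m + m ≤ N) {A B Sg K a δ : ℝ} (hA : 0 ≤ A) (hB : 0 ≤ B) (hK : 0 ≤ K)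
    (hKM : K ≤ M) (ha : A / M ≤ a)
    (hblk : ∀ g : Config m → ℝ, Sg * _root_.expect ρ (fun η => g η ^ 2)
      ≤ K * ∑ i, dirAt 1 ρ g i + _root_.expect ρ (fun η => pot A B ρ η * g η ^ 2))
    (g G : Config N → ℝ)
    (hG : ∀ η, (∑ b, if (∀ j, η (site (h b) j) = true) then (1 : ℝ) else 0) * G η ^ 2
      ≤ δ * M * g η ^ 2) :
    Sg * _root_.expect ρ (fun η => G η ^ 2) ≤ ∑ i, dirAt 0 ρ G i
      + a * _root_.expect ρ (fun η => escRate KCM.fa2 ρ η * G η ^ 2)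
      + B * δ * _root_.expect ρ (fun η => g η ^ 2) := by
  have hM0 : (0 : ℝ) < M := by exact_mod_cast hM
  have hs := Finset.sum_le_sum fun b (_ : b ∈ (Finset.univ : Finset (Fin M))) =>
    local_bound h0 h1 (h b) hA hK hblk G
  rw [Finset.sum_const, Finset.card_univ, Fintype.card_fin, nsmul_eq_mul, Finset.sum_add_distrib,
    ← Finset.mul_sum, ← ex_sum] at hs
  have hd : K * ∑ b, ∑ j, dirAt 0 ρ G (site (h b) j) ≤ M * ∑ i, dirAt 0 ρ G i := by
    refine mul_le_mul hKM
      (sum_site_le h fun i => dirAt_nonneg (Or.inl rfl) h0 h1 G i) ?_ hM0.le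
    exact Finset.sum_nonneg fun b _ => Finset.sum_nonneg fun j _ =>
      dirAt_nonneg (Or.inl rfl) h0 h1 G _
  have hp : _root_.expect ρ (fun η => ∑ b, (A * ∑ j, rate 0 ρ η (site (h b) j)
        + if (∀ j, η (site (h b) j) = true) then B else 0) * G η ^ 2)
      ≤ A * _root_.expect ρ (fun η => escRate KCM.fa2 ρ η * G η ^ 2)
        + (B * (δ * M)) * _root_.expect ρ (fun η => g η ^ 2) := by
    rw [← ex_mul, ← ex_mul, ← ex_add]
    refine ex_mono h0 h1 fun η => ?_
    rw [← Finset.sum_mul, Finset.sum_add_distrib, ← Finset.mul_sum, add_mul]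
    have e : (∑ b, if (∀ j, η (site (h b) j) = true) then B else 0)
        = B * ∑ b, if (∀ j, η (site (h b) j) = true) then (1 : ℝ) else 0 := by
      rw [Finset.mul_sum]; exact Finset.sum_congr rfl fun b _ => by split_ifs <;> simp
    rw [e]
    refine add_le_add ?_ ?_
    · rw [mul_assoc, escRate_eq]
      refine mul_le_mul_of_nonneg_left (mul_le_mul_of_nonneg_right ?_ (sq_nonneg _)) hA
      exact sum_site_le h fun i => rate_nonneg (Or.inl rfl) h0 h1 η i
    · rw [mul_assoc, mul_assoc B]
      exact mul_le_mul_of_nonneg_left (hG η) hB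
  have hE : 0 ≤ _root_.expect ρ (fun η => escRate KCM.fa2 ρ η * G η ^ 2) :=
    ex_nonneg h0 h1 fun η => mul_nonneg (escRate_nonneg h0 h1 η) (sq_nonneg _)
  have hAa : A * _root_.expect ρ (fun η => escRate KCM.fa2 ρ η * G η ^ 2)
      ≤ M * (a * _root_.expect ρ (fun η => escRate KCM.fa2 ρ η * G η ^ 2)) := by
    rw [← mul_assoc]
    refine mul_le_mul_of_nonneg_right ?_ hE
    rw [div_le_iff₀ hM0] at ha
    linarith
  refine le_of_mul_le_mul_left ?_ hM0
  calc _ ≤ _ := hs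
    _ ≤ M * ∑ i, dirAt 0 ρ G i
        + (M * (a * _root_.expect ρ (fun η => escRate KCM.fa2 ρ η * G η ^ 2))
          + (B * (δ * M)) * _root_.expect ρ (fun η => g η ^ 2)) :=
      add_le_add hd (hp.trans (add_le_add hAa le_rfl))
    _ = _ := by ring

/-- The unnormalised partition: a constant, and one cut-off per block. -/
noncomputable def cut (ℓ M : ℕ) (δ : ℝ) {N : ℕ} : Option (Fin M) → Config N → ℝ
  | none, _ => Real.sqrt (δ * M)
  | some b, η => hat ℓ (b.1 * (2 * ℓ + 2) + ℓ) η

lemma cut_sum {ℓ M N : ℕ} {δ : ℝ} (hδ : 0 ≤ δ) (η : Config N) :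
    ∑ a, cut ℓ M δ a η ^ 2 = δ * M + ∑ b : Fin M, hat ℓ (b.1 * (2 * ℓ + 2) + ℓ) η ^ 2 := by
  rw [Fintype.sum_option]
  simp only [cut]
  rw [Real.sq_sqrt (by positivity)]

lemma cut_grad {ρ : ℝ} (h0 : 0 < ρ) (h1 : ρ < 1) {ℓ M N : ℕ} {δ : ℝ} (hℓ : 1 ≤ ℓ)
    (h : ∀ b : Fin M, b.1 * (2 * ℓ + 2) + (2 * ℓ + 2) ≤ N) (η : Config N) :
    ∑ i, rate 0 ρ η i * ∑ a, (cut ℓ M δ a (flipAt η i) - cut ℓ M δ a η) ^ 2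
      ≤ M * (4 / ℓ) := by
  have hℓ0 : (0 : ℝ) < ℓ := by exact_mod_cast hℓ
  calc ∑ i, rate 0 ρ η i * ∑ a, (cut ℓ M δ a (flipAt η i) - cut ℓ M δ a η) ^ 2
      ≤ ∑ i : Fin N, ∑ b : Fin M,
        (if b.1 * (2 * ℓ + 2) ≤ i.1 ∧ i.1 < b.1 * (2 * ℓ + 2) + (2 * ℓ + 2)
          then 1 / (ℓ : ℝ) ^ 2 else 0) := by
        refine Finset.sum_le_sum fun i _ => ?_
        rw [Fintype.sum_option]
        simp only [cut, sub_self, ne_eq, OfNat.ofNat_ne_zero, not_false_eq_true, zero_pow, zero_add]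
        rw [Finset.mul_sum]
        refine Finset.sum_le_sum fun b _ => ?_
        have hb := h b
        have hle := rate_le (b := 0) (Or.inl rfl) h0 h1 η i
        have hnn := rate_nonneg (b := 0) (Or.inl rfl) h0 h1 η i
        rcases rr_mem (b := 0) (Or.inl rfl) η i with hr | hr
        · rw [le_antisymm (hle.trans hr.le) hnn, zero_mul]
          split_ifs <;> positivity
        · have hg := hat_grad (ℓ := ℓ) (c := b.1 * (2 * ℓ + 2) + ℓ) (by omega) (by omega)
            (η := η) (i := i) (by rw [hr]; norm_num)
          refine (mul_le_of_le_one_left (sq_nonneg _) (hle.trans hr.le)).trans (hg.trans (le_of_eq ?_))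
          refine if_congr ?_ rfl rfl
          constructor <;> rintro ⟨a, b⟩ <;> constructor <;> omega
    _ = ∑ b : Fin M, (2 * ℓ + 2 : ℕ) * (1 / (ℓ : ℝ) ^ 2) := by
        rw [Finset.sum_comm]
        refine Finset.sum_congr rfl fun b _ => ?_
        rw [← Finset.sum_filter, filter_block (h b), Finset.sum_const, Finset.card_map,
          Finset.card_univ, Fintype.card_fin, nsmul_eq_mul]
    _ ≤ M * (4 / ℓ) := by
        rw [Finset.sum_const, Finset.card_univ, Fintype.card_fin, nsmul_eq_mul]
        refine mul_le_mul_of_nonneg_left ?_ (Nat.cast_nonneg M)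
        rw [mul_one_div, div_le_div_iff₀ (by positivity) hℓ0]
        push_cast
        have : (1 : ℝ) ≤ ℓ := by exact_mod_cast hℓ
        nlinarith [mul_nonneg hℓ0.le hℓ0.le]

/-- The quadratic form inequality behind the upper bound. -/
lemma upper_core {ρ : ℝ} (h0 : 0 < ρ) (h1 : ρ < 1) {ℓ M N : ℕ} (hℓ : 1 ≤ ℓ) (hM : 1 ≤ M)
    (hN : M * (2 * ℓ + 2) ≤ N) {A B Sg K a δ : ℝ} (hA : 0 ≤ A) (hB : 0 ≤ B) (hK : 0 ≤ K)
    (hδ : 0 < δ) (hKM : K ≤ M) (ha : A / M ≤ a)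
    (hs : ∀ L L', Sg ≤ SigmaTwo ρ L L')
    (hblk : ∀ g : Config (2 * ℓ + 2) → ℝ, Sg * _root_.expect ρ (fun η => g η ^ 2)
      ≤ K * ∑ i, dirAt 1 ρ g i + _root_.expect ρ (fun η => pot A B ρ η * g η ^ 2))
    {g : Config N → ℝ} (hg : ∀ η, 0 ≤ g η) :
    (Sg - B * δ - 4 / (δ * ℓ)) * _root_.expect ρ (fun η => g η ^ 2)
      ≤ a * _root_.expect ρ (fun η => g η ^ 2 * escRate KCM.fa2 ρ η) + dirichlet KCM.fa2 ρ g := by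
  have hM0 : (0 : ℝ) < M := by exact_mod_cast hM
  have hℓ0 : (0 : ℝ) < ℓ := by exact_mod_cast hℓ
  have ha0 : 0 ≤ a := le_trans (by positivity) ha
  have hblock : ∀ b : Fin M, b.1 * (2 * ℓ + 2) + (2 * ℓ + 2) ≤ N := fun b => by
    have : (b.1 + 1) * (2 * ℓ + 2) ≤ M * (2 * ℓ + 2) := Nat.mul_le_mul_right _ b.2
    rw [add_mul, one_mul] at this
    exact this.trans hN
  set v : Option (Fin M) → Config N → ℝ := cut ℓ M δ with hv
  set G : Option (Fin M) → Config N → ℝ :=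
    fun x η => v x η / Real.sqrt (∑ y, v y η ^ 2) * g η with hG
  have hr : 0 < δ * M := by positivity
  have hR : ∀ η, δ * M ≤ ∑ y, v y η ^ 2 := fun η => by
    rw [hv, cut_sum hδ.le]
    exact le_add_of_nonneg_right (Finset.sum_nonneg fun b _ => sq_nonneg _)
  have hRpos : ∀ η, 0 < ∑ y, v y η ^ 2 := fun η => hr.trans_le (hR η)
  have hGsq : ∀ x η, G x η ^ 2 = v x η ^ 2 / (∑ y, v y η ^ 2) * g η ^ 2 := fun x η => by
    simp only [hG]
    rw [mul_pow, div_pow, Real.sq_sqrt (hRpos η).le]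
  have hGsum : ∀ η, ∑ x, G x η ^ 2 = g η ^ 2 := fun η => by
    simp only [hGsq]
    rw [← Finset.sum_mul, ← Finset.sum_div, div_self (hRpos η).ne', one_mul]
  -- localisation error
  have hI : ∑ x, ∑ i, dirAt 0 ρ (G x) i
      ≤ ∑ i, dirAt 0 ρ g i + 4 / (δ * ℓ) * _root_.expect ρ (fun η => g η ^ 2) := by
    rw [Finset.sum_comm]
    refine (Finset.sum_le_sum fun i _ => ims h0 h1 v hr hR hg i).trans ?_
    rw [Finset.sum_add_distrib, ← Finset.mul_sum, ← ex_sum]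
    refine add_le_add le_rfl ?_
    have : _root_.expect ρ (fun η => ∑ i, rate 0 ρ η i
          * ((∑ x, (v x (flipAt η i) - v x η) ^ 2) * g η ^ 2))
        ≤ M * (4 / ℓ) * _root_.expect ρ (fun η => g η ^ 2) := by
      rw [← ex_mul]
      refine ex_mono h0 h1 fun η => ?_
      simp only [← mul_assoc]
      rw [← Finset.sum_mul]
      exact mul_le_mul_of_nonneg_right (cut_grad h0 h1 hℓ hblock η) (sq_nonneg _)
    calc _ ≤ 1 / (δ * M) * (M * (4 / ℓ) * _root_.expect ρ (fun η => g η ^ 2)) :=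
          mul_le_mul_of_nonneg_left this (by positivity)
      _ = _ := by field_simp
  -- each localised piece charges only configurations with a given occupied pair
  have hII : ∀ b : Fin M, Sg * _root_.expect ρ (fun η => G (some b) η ^ 2)
      ≤ ∑ i, dirAt 0 ρ (G (some b)) i := fun b => by
    rw [← dirichlet_eq]
    have hb := hblock b
    refine dirichlet_ge h0 h1 hs (p := b.1 * (2 * ℓ + 2) + ℓ) (by omega) ?_ ?_
    · intro η
      exact mul_nonneg (div_nonneg (hat_nonneg _ _ _) (Real.sqrt_nonneg _)) (hg η)
    · intro η hne
      have hh : hat ℓ (b.1 * (2 * ℓ + 2) + ℓ) η ≠ 0 := by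
        intro e
        apply hne
        simp only [hG, hv, cut, e, zero_div, zero_mul]
      rw [occAt_succ η (show b.1 * (2 * ℓ + 2) + ℓ < N by omega),
        occAt_succ η (show b.1 * (2 * ℓ + 2) + ℓ + 1 < N by omega)]
      unfold occ
      rw [hat_ne_zero hh ⟨_, _⟩ (by simp) (by simp), hat_ne_zero hh ⟨_, _⟩ (by simp) (by simp)]
      simp
  have hIII : Sg * _root_.expect ρ (fun η => G none η ^ 2) ≤ ∑ i, dirAt 0 ρ (G none) i
      + a * _root_.expect ρ (fun η => escRate KCM.fa2 ρ η * G none η ^ 2)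
      + B * δ * _root_.expect ρ (fun η => g η ^ 2) := by
    refine none_bound h0 h1 hM hblock hA hB hK hKM ha hblk g (G none) fun η => ?_
    have hF : (∑ b, if (∀ j, η (site (hblock b) j) = true) then (1 : ℝ) else 0)
        ≤ ∑ y, v y η ^ 2 := by
      rw [hv, cut_sum hδ.le]
      refine le_trans (Finset.sum_le_sum fun b _ => ?_) (le_add_of_nonneg_left hr.le)
      split_ifs with hf
      · rw [hat_full hℓ fun i hi hi' => ?_, one_pow]
        obtain ⟨j, rfl⟩ := exists_site (hblock b) (i := i) ⟨by omega, by omega⟩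
        exact hf j
      · exact sq_nonneg _
    have hn : v none η ^ 2 = δ * M := by
      simp only [hv, cut]; exact Real.sq_sqrt hr.le
    rw [hGsq, hn, ← mul_assoc]
    refine mul_le_mul_of_nonneg_right ?_ (sq_nonneg _)
    rw [mul_div_assoc', div_le_iff₀ (hRpos η), mul_comm (δ * M)]
    exact mul_le_mul_of_nonneg_right hF hr.le
  have hIV : a * _root_.expect ρ (fun η => escRate KCM.fa2 ρ η * G none η ^ 2)
      ≤ a * _root_.expect ρ (fun η => g η ^ 2 * escRate KCM.fa2 ρ η) := by
    refine mul_le_mul_of_nonneg_left (ex_mono h0 h1 fun η => ?_) ha0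
    rw [mul_comm]
    refine mul_le_mul_of_nonneg_right ?_ (escRate_nonneg h0 h1 η)
    rw [← hGsum η]
    exact Finset.single_le_sum (f := fun x => G x η ^ 2) (fun x _ => sq_nonneg _)
      (Finset.mem_univ none)
  have hV : _root_.expect ρ (fun η => g η ^ 2)
      = _root_.expect ρ (fun η => G none η ^ 2)
        + ∑ b, _root_.expect ρ (fun η => G (some b) η ^ 2) := by
    rw [← ex_sum, ← ex_add]
    refine ex_congr fun η => ?_
    rw [← hGsum η, Fintype.sum_option]
  rw [Fintype.sum_option] at hI
  have hII' := Finset.sum_le_sum fun b (_ : b ∈ (Finset.univ : Finset (Fin M))) => hII b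
  rw [← Finset.mul_sum] at hII'
  rw [dirichlet_eq]
  have : Sg * _root_.expect ρ (fun η => g η ^ 2)
      = Sg * _root_.expect ρ (fun η => G none η ^ 2)
        + Sg * ∑ b, _root_.expect ρ (fun η => G (some b) η ^ 2) := by rw [hV]; ring
  linarith

/-- Above the threshold, `-Σ` is an asymptotic upper bound. The scales are chosen in the order
`δ`, then the block radius `ℓ`, then the number `M` of blocks. -/
lemma phi_upper {ρ : ℝ} (h0 : 0 < ρ) (h1 : ρ < 1) {Sg α : ℝ} (hS0 : 0 ≤ Sg)
    (hs : ∀ L L', Sg ≤ SigmaTwo ρ L L') (hα : α < 0)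
    (hth : Sg < -α * (2 * ρ * (1 - ρ) * (1 - ρ ^ 2))) {c : ℝ} (hc : c < Sg) :
    ∀ᶠ N : ℕ in atTop, phi KCM.fa2 ρ N (α / N) < -c := by
  set act := 2 * ρ * (1 - ρ) * (1 - ρ ^ 2) with hact
  obtain ⟨ε, hε, hcε⟩ : ∃ ε, 0 < ε ∧ c < Sg - ε :=
    ⟨(Sg - c) / 2, by linarith, by linarith⟩
  set δ := ε / (2 * (Sg + 1)) with hδ
  have hδ0 : 0 < δ := by positivity
  -- choice of the block radius
  have t1 : Tendsto (fun ℓ : ℕ => 4 / (δ * (ℓ : ℝ))) atTop (nhds 0) :=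
    Tendsto.div_atTop tendsto_const_nhds
      (tendsto_natCast_atTop_atTop.const_mul_atTop hδ0)
  have t0 : Tendsto (fun ℓ : ℕ => 1 / (((2 * ℓ + 2 : ℕ)) : ℝ)) atTop (nhds 0) := by
    refine Tendsto.div_atTop tendsto_const_nhds (tendsto_natCast_atTop_atTop.comp ?_)
    exact tendsto_atTop_mono (fun n => by simp only [id]; omega) tendsto_id
  have t2 : Tendsto (fun ℓ : ℕ => -α * (1 - 1 / ((2 * ℓ + 2 : ℕ) : ℝ))
      * (1 - 2 * (1 / ((2 * ℓ + 2 : ℕ) : ℝ))) * act) atTop (nhds (-α * (1 - 0) * (1 - 2 * 0) * act)) :=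
    (((tendsto_const_nhds.sub t0).const_mul _).mul
      (tendsto_const_nhds.sub (t0.const_mul 2))).mul_const _
  obtain ⟨ℓ, hℓ, hℓ1, hℓ2⟩ := ((eventually_ge_atTop 1).and
    ((t1.eventually (gt_mem_nhds (half_pos hε))).and
      (t2.eventually (lt_mem_nhds (show Sg < _ by simpa using hth))))).exists
  set m := 2 * ℓ + 2 with hm
  have hm0 : (0 : ℝ) < m := by positivity
  set A := -α * (1 - 1 / (m : ℝ)) / m with hA
  have hm1 : 1 / (m : ℝ) ≤ 1 := by
    rw [div_le_one hm0]; exact_mod_cast (by omega : 1 ≤ m)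
  have hA0 : 0 ≤ A := by
    refine div_nonneg (mul_nonneg (by linarith) (by linarith)) hm0.le
  have hAact : Sg < A * (((2 * ℓ : ℕ) : ℝ) * act) := by
    refine hℓ2.trans_le (le_of_eq ?_)
    have : ((2 * ℓ : ℕ) : ℝ) = m - 2 := by rw [hm]; push_cast; ring
    rw [this, hA]
    field_simp
  obtain ⟨K, hK0, hblk⟩ := block_bound h0 h1 (n := 2 * ℓ) (B := Sg + 1) hA0 hS0 hAact (by linarith)
  have hcore : ∀ᶠ N : ℕ in atTop, ∀ g : Config N → ℝ, (∀ η, 0 ≤ g η) →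
      (Sg - ε) * _root_.expect ρ (fun η => g η ^ 2) ≤ -(α / N)
        * _root_.expect ρ (fun η => g η ^ 2 * escRate KCM.fa2 ρ η) + dirichlet KCM.fa2 ρ g := by
    have hdiv : Tendsto (fun N : ℕ => N / m) atTop atTop :=
      Nat.tendsto_div_const_atTop (by omega)
    filter_upwards [hdiv.eventually_ge_atTop ⌈K⌉₊, hdiv.eventually_ge_atTop m,
      eventually_ge_atTop 1] with N hNK hNm hN1 g hg
    set M := N / m with hM
    have hM1 : 1 ≤ M := by omega
    have hM0 : (0 : ℝ) < M := by exact_mod_cast hM1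
    have hN0 : (0 : ℝ) < N := by exact_mod_cast hN1
    have hNM : (N : ℝ) ≤ (M + 1) * m := by
      have : N < m * (N / m + 1) := Nat.lt_mul_div_succ N (by omega)
      have : N ≤ (M + 1) * m := by rw [mul_comm]; exact this.le
      exact_mod_cast this
    have haN : A / M ≤ -(α / N) := by
      rw [hA, div_div, ← neg_div, div_le_div_iff₀ (by positivity) hN0, mul_assoc]
      refine mul_le_mul_of_nonneg_left ?_ (by linarith)
      have hmM : (m : ℝ) ≤ M := by exact_mod_cast hNm
      calc (1 - 1 / (m : ℝ)) * N ≤ (1 - 1 / (m : ℝ)) * ((M + 1) * m) :=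
            mul_le_mul_of_nonneg_left hNM (by linarith)
        _ = m * M + m - (M + 1) := by field_simp
        _ ≤ m * M := by linarith
    have := upper_core h0 h1 hℓ hM1 (Nat.div_mul_le_self N m) hA0 (by linarith : 0 ≤ Sg + 1) hK0 hδ0
      ((Nat.le_ceil K).trans (by exact_mod_cast hNK)) haN hs hblk hg
    refine le_trans (mul_le_mul_of_nonneg_right ?_ (ex_nonneg h0 h1 fun η => sq_nonneg _)) this
    have : (Sg + 1) * δ = ε / 2 := by rw [hδ]; field_simp
    linarith
  have hexp : Tendsto (fun N : ℕ => Real.exp (α / N) * (Sg - ε)) atTop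
      (nhds (Real.exp 0 * (Sg - ε))) :=
    ((Real.continuous_exp.tendsto 0).comp (tendsto_const_div_atTop_nhds_zero_nat α)).mul_const _
  rw [Real.exp_zero, one_mul] at hexp
  filter_upwards [hcore, hexp.eventually (lt_mem_nhds hcε)] with N hN hNc
  refine lt_of_le_of_lt ?_ (neg_lt_neg hNc)
  unfold phi
  refine csSup_le ⟨_, fun _ => 1, fun _ => zero_le_one, ex_const ρ 1, rfl⟩ ?_
  rintro x ⟨f, hf, hf1, rfl⟩
  refine (phi_values_le h0 h1 _ hf).trans ?_
  have := hN (fun η => Real.sqrt (f η)) fun η => Real.sqrt_nonneg _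
  simp only [Real.sq_sqrt (hf _)] at this
  have e : _root_.expect ρ (fun η => f η) = 1 := hf1
  rw [e, mul_one] at this
  rw [neg_mul]
  exact neg_le_neg (mul_le_mul_of_nonneg_left this (Real.exp_pos _).le)

/-- **Theorem 2.1(ii) for FA-1f with two empty boundaries** (combination of
Lemmas 5.2 and 5.3). Let `Σ` be the two-boundary interface energy at density
`ρ ∈ (0,1)` (the iterated limit of `Σ_{L,L'}`) and `𝔸 = 2ρ(1−ρ)(1−ρ²)`. Then for
every `α < −(Σ + 8√(ρ(1−ρ)))/𝔸`, `lim_{N→∞} φ^{(N)}(α/N)` exists and equals `−Σ`. -/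
theorem inactive_regime_fa2 (ρ : ℝ) (hρ0 : 0 < ρ) (hρ1 : ρ < 1)
    (Sg : ℝ) (S : ℕ → ℝ)
    (hS : ∀ L : ℕ, Filter.Tendsto (fun L' : ℕ => SigmaTwo ρ L L') Filter.atTop (nhds (S L)))
    (hSg : Filter.Tendsto S Filter.atTop (nhds Sg))
    (α : ℝ)
    (hα : α < -(Sg + 8 * Real.sqrt (ρ * (1 - ρ))) / (2 * ρ * (1 - ρ) * (1 - ρ ^ 2))) :
    Filter.Tendsto (fun N : ℕ => phi KCM.fa2 ρ N (α / N)) Filter.atTop (nhds (-Sg)) := by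
  have hs := limit_le_sigma hρ0 hρ1 hS hSg
  have hS0 := limit_nonneg hρ0 hρ1 hS hSg
  have hact : 0 < 2 * ρ * (1 - ρ) * (1 - ρ ^ 2) := by
    have : ρ ^ 2 < 1 := by nlinarith
    have h1 : 0 < 1 - ρ := by linarith
    have h2 : 0 < 1 - ρ ^ 2 := by linarith
    positivity
  have hth : Sg + 8 * Real.sqrt (ρ * (1 - ρ)) < -α * (2 * ρ * (1 - ρ) * (1 - ρ ^ 2)) := by
    rw [lt_div_iff₀ hact] at hα
    linarith
  have hsq : 0 < Real.sqrt (ρ * (1 - ρ)) :=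
    Real.sqrt_pos.2 (mul_pos hρ0 (by linarith))
  have hα0 : α < 0 := by
    by_contra hcon
    have := mul_nonneg (not_lt.1 hcon) hact.le
    linarith
  refine tendsto_order.2 ⟨fun x hx => ?_, fun x hx => ?_⟩
  · obtain ⟨L, hL⟩ := (hSg.eventually (gt_mem_nhds (show Sg < -x by linarith))).exists
    obtain ⟨L', hL'⟩ := ((hS L).eventually (gt_mem_nhds hL)).exists
    simpa using phi_lower hρ0 hρ1 hα0.le hL'
  · simpa using phi_upper hρ0 hρ1 hS0 hs hα0 (by linarith) (show -x < Sg by linarith)
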